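/- arXiv:1311.3437 — 2 statements merged into one kernel-verified Lean document; each statement's English description precedes it below -/
import Mathlib

section
/- Let ω ∈ ℝ^k have rationally independent components and let u: 𝕋^k → U be continuous such that D_ω u and D_ω² u exist and are continuous on 𝕋^k. Then the function x(t) := u(tω) is a classical solution of the Euler–Lagrange equations ẍ + Γ_x(ẋ,ẋ) = g(x)⁻¹ W'_x(tω, x) for all t ∈ ℝ if and only if for every continuously differentiable h: 𝕋^k → ℝ^m one has ∫_{𝕋^k} [ ( g(u(φ)) D_ω u(φ) , D_ω h(φ) + Γ_{u(φ)}(D_ω u(φ), h(φ)) ) + ( W'_x(φ, u(φ)) , h(φ) ) ] dφ = 0. (This is the single-chart form of Proposition 1 of the paper, characterizing classical quasiperiodic solutions by a weak variational identity on the torus.) -/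
/-!
Write `v = D_ω u` and let `R = g(u) (D_ω v + Γ_u(v, v)) - W'_x(φ, u)` be the Euler–Lagrange
residual with its index lowered by the metric. Since `g` is invertible, `x(t) = u(tω)` is a
solution iff `R` vanishes on the orbit `{tω}`, which by Weyl's equidistribution theorem is the same
as `R = 0` on the whole torus: the time average of `‖R‖` along the orbit is its mean over the torus.

Compatibility of the Levi-Civita connection with `g` gives, for every test function `h`,
`(g v, D_ω h + Γ(v, h)) + (W'_x, h) = D_ω (g v, h) - (R, h)`. A derivative in direction `ω` has
integral zero over the torus, so the weak identity says that `∫ (R, h) = 0` for all `h`, which is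
`R = 0` by the density of trigonometric polynomials.

The same density proves equidistribution: for rationally independent `ω`, a trigonometric
polynomial is its mean plus `D_ω q` with `q` bounded, so its time averages converge to that mean.
-/

open MeasureTheory Real Set

/-- Directional derivative `D_ω f(φ) := (d/dt)|_{t=0} f(φ + tω)`. -/
noncomputable def dirDeriv {k : ℕ} {E : Type*} [NormedAddCommGroup E] [NormedSpace ℝ E]
    (ω : Fin k → ℝ) (f : (Fin k → ℝ) → E) (φ : Fin k → ℝ) : E :=
  deriv (fun t : ℝ => f (φ + t • ω)) 0

/-- A function on `ℝ^k` represents a function on the torus `𝕋^k = ℝ^k/(2πℤ^k)`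
if it is `2π`-periodic in every coordinate. -/
def TorusPer {k : ℕ} {E : Type*} (f : (Fin k → ℝ) → E) : Prop :=
  ∀ (φ : Fin k → ℝ) (n : Fin k → ℤ), f (φ + fun i => 2 * Real.pi * (n i : ℝ)) = f φ

/-- Fundamental domain `[0,2π]^k` of the torus `𝕋^k`. -/
def torusBox (k : ℕ) : Set (Fin k → ℝ) := Set.Icc 0 (fun _ => 2 * Real.pi)

/-- Euclidean dot product on `ℝ^n`. -/
def dotp {n : ℕ} (a b : Fin n → ℝ) : ℝ := ∑ i, a i * b i

/-- Euclidean partial derivative `∂_j f(x)`. -/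
noncomputable def pd {m : ℕ} (f : (Fin m → ℝ) → ℝ) (x : Fin m → ℝ) (j : Fin m) : ℝ :=
  fderiv ℝ f x (Pi.single j 1)

/-- The Christoffel bilinear map of a metric tensor `g`:
`Γ_x(a,b)^i = ½ Σ_{j,k,l} (g(x)⁻¹)^{il}(∂_j g_{lk}(x) + ∂_k g_{jl}(x) − ∂_l g_{jk}(x)) a^j b^k`. -/
noncomputable def christoffel {m : ℕ} (g : (Fin m → ℝ) → Matrix (Fin m) (Fin m) ℝ)
    (x a b : Fin m → ℝ) : Fin m → ℝ :=
  fun i => (1 / 2) * ∑ l, (g x)⁻¹ i l *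
    ∑ j, ∑ k, (pd (fun y => g y l k) x j + pd (fun y => g y j l) x k
      - pd (fun y => g y j k) x l) * a j * b k

/-- Euclidean partial gradient `W'_x(φ,x)` of a force function `W(φ,·)`. -/
noncomputable def gradW {k m : ℕ} (W : (Fin k → ℝ) → (Fin m → ℝ) → ℝ)
    (φ : Fin k → ℝ) (x : Fin m → ℝ) : Fin m → ℝ :=
  fun i => fderiv ℝ (W φ) x (Pi.single i 1)

open Filter Topology Pointwise Matrix

section LineDeriv

variable {V E : Type*} [AddCommGroup V] [Module ℝ V] [NormedAddCommGroup E] [NormedSpace ℝ E]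
  {f f' : V → E} {v : V}

theorem hasDerivAt_add_smul (hf : ∀ x, HasLineDerivAt ℝ f (f' x) x v) (x : V) (t : ℝ) :
    HasDerivAt (fun s : ℝ => f (x + s • v)) (f' (x + t • v)) t := by
  have h : HasDerivAt (fun s : ℝ => f (x + t • v + s • v)) (f' (x + t • v)) (t - t) := by
    rw [sub_self]
    exact hf (x + t • v)
  refine (h.comp_sub_const t t).congr_of_eventuallyEq (.of_forall fun s => congrArg f ?_)
  module

variable [TopologicalSpace V] [ContinuousAdd V] [ContinuousSMul ℝ V]

theorem intervalIntegral_lineDeriv [CompleteSpace E] (hf : ∀ x, HasLineDerivAt ℝ f (f' x) x v)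
    (hf' : Continuous f') (x : V) (a b : ℝ) :
    ∫ t in a..b, f' (x + t • v) = f (x + b • v) - f (x + a • v) :=
  intervalIntegral.integral_eq_sub_of_hasDerivAt (fun t _ => hasDerivAt_add_smul hf x t)
    (Continuous.intervalIntegrable (by fun_prop) a b)

theorem tendsto_intervalAverage_of_hasLineDerivAt [CompleteSpace E] {c : E} {C : ℝ}
    (hf : ∀ x, HasLineDerivAt ℝ f (f' x - c) x v) (hf' : Continuous f')
    (hC : ∀ x, ‖f x‖ ≤ C) (x : V) :
    Tendsto (fun T : ℝ => ⨍ t in 0..T, f' (x + t • v)) atTop (𝓝 c) := by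
  have hdiff : ∀ T : ℝ, 0 < T →
      T⁻¹ • (f (x + T • v) - f x) + c = ⨍ t in 0..T, f' (x + t • v) := by
    intro T hT
    have hint := intervalIntegral_lineDeriv hf (by fun_prop) x 0 T
    rw [intervalIntegral.integral_sub (Continuous.intervalIntegrable (by fun_prop) 0 T) (by simp),
      intervalIntegral.integral_const, zero_smul, add_zero, sub_zero] at hint
    rw [← hint, interval_average_eq, sub_zero, smul_sub, inv_smul_smul₀ hT.ne', sub_add_cancel]
  have hbdd : IsBoundedUnder (· ≤ ·) atTop fun T : ℝ => ‖f (x + T • v) - f x‖ :=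
    isBoundedUnder_of ⟨C + C, fun T => (norm_sub_le _ _).trans (add_le_add (hC _) (hC _))⟩
  have hlim := (tendsto_inv_atTop_zero.zero_smul_isBoundedUnder_le hbdd).add_const c
  rw [zero_add] at hlim
  exact hlim.congr' ((eventually_gt_atTop 0).mono hdiff)

end LineDeriv

theorem norm_setAverage_sub_setAverage_le {α E : Type*} {_ : MeasurableSpace α} {μ : Measure α}
    [NormedAddCommGroup E] [NormedSpace ℝ E] {s : Set α} {f g : α → E} {ε : ℝ}
    (hε : 0 ≤ ε) (hs : μ s ≠ ⊤) (hf : IntegrableOn f s μ) (hg : IntegrableOn g s μ)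
    (h : ∀ x ∈ s, ‖f x - g x‖ ≤ ε) : ‖(⨍ x in s, f x ∂μ) - ⨍ x in s, g x ∂μ‖ ≤ ε := by
  rw [setAverage_eq, setAverage_eq, ← smul_sub, ← integral_sub hf hg, norm_smul, norm_inv,
    Real.norm_of_nonneg measureReal_nonneg]
  have hint : ‖∫ x in s, (f x - g x) ∂μ‖ ≤ ε * μ.real s :=
    norm_setIntegral_le_of_norm_le_const hs.lt_top h
  exact inv_mul_le_of_le_mul₀ measureReal_nonneg hε (by rwa [mul_comm])

/-! ### Integration over the torus -/

section Torus

variable {k : ℕ} {E : Type*}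

theorem TorusPer.comp {E' : Type*} {f : (Fin k → ℝ) → E} (hf : TorusPer f) (F : E → E') :
    TorusPer fun φ => F (f φ) :=
  fun φ n => congrArg F (hf φ n)

/-- The basis `2π eᵢ` of `ℝ^k`, which spans the period lattice `2πℤ^k` of the torus over `ℤ`. -/
noncomputable def torusBasis (k : ℕ) : Module.Basis (Fin k) ℝ (Fin k → ℝ) :=
  (Pi.basisFun ℝ (Fin k)).unitsSMul fun _ => Units.mk0 (2 * π) two_pi_pos.ne'

theorem torusBasis_apply (i : Fin k) : torusBasis k i = Pi.single i (2 * π) := by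
  simp [torusBasis, Module.Basis.unitsSMul_apply, Units.smul_def, ← Pi.single_smul]

theorem torusBasis_repr (x : Fin k → ℝ) (i : Fin k) :
    (torusBasis k).repr x i = x i / (2 * π) := by
  simp [torusBasis, Module.Basis.repr_unitsSMul, Units.smul_def, div_eq_inv_mul]

theorem fundamentalDomain_torusBasis_ae_eq :
    ZSpan.fundamentalDomain (torusBasis k) =ᵐ[volume] torusBox k := by
  have hIco : ZSpan.fundamentalDomain (torusBasis k) = Set.pi univ fun _ => Ico 0 (2 * π) := by
    ext x
    simp only [ZSpan.mem_fundamentalDomain, torusBasis_repr, Set.mem_pi, mem_univ, true_imp_iff,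
      mem_Ico, div_lt_one two_pi_pos, le_div_iff₀ two_pi_pos, zero_mul]
  rw [hIco]
  exact Measure.univ_pi_Ico_ae_eq_Icc (μ := fun _ : Fin k => (volume : Measure ℝ))

theorem TorusPer.vadd_eq {f : (Fin k → ℝ) → E} (hf : TorusPer f)
    (γ : Submodule.span ℤ (range (torusBasis k))) (φ : Fin k → ℝ) : f (γ +ᵥ φ) = f φ := by
  obtain ⟨n, hn⟩ := (Submodule.mem_span_range_iff_exists_fun ℤ).1 γ.2
  have hγ : (γ : Fin k → ℝ) = fun i => 2 * π * (n i : ℝ) := by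
    ext i
    simp [← hn, torusBasis_apply, Finset.sum_apply, Pi.single_apply, mul_comm]
  rw [Submodule.vadd_def, vadd_eq_add, add_comm, hγ, hf φ n]

variable [NormedAddCommGroup E]

theorem isCompact_torusBox (k : ℕ) : IsCompact (torusBox k) := isCompact_Icc

theorem integrableOn_torusBox {f : (Fin k → ℝ) → E} (hf : Continuous f) :
    IntegrableOn f (torusBox k) :=
  hf.continuousOn.integrableOn_compact (isCompact_torusBox k)

variable [NormedSpace ℝ E]

theorem TorusPer.setIntegral_add_right {f : (Fin k → ℝ) → E} (hf : TorusPer f) (a : Fin k → ℝ) :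
    ∫ φ in torusBox k, f (φ + a) = ∫ φ in torusBox k, f φ := by
  have : VAddInvariantMeasure (Submodule.span ℤ (range (torusBasis k))) (Fin k → ℝ) volume :=
    inferInstanceAs <| VAddInvariantMeasure
      (Submodule.span ℤ (range (torusBasis k))).toAddSubgroup (Fin k → ℝ) volume
  have hD := ZSpan.isAddFundamentalDomain (torusBasis k) (volume : Measure (Fin k → ℝ))
  have htranslate := (measurePreserving_add_left (volume : Measure (Fin k → ℝ)) a)
    |>.setIntegral_image_emb (measurableEmbedding_addLeft a) f
      (ZSpan.fundamentalDomain (torusBasis k))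
  calc ∫ φ in torusBox k, f (φ + a)
      = ∫ φ in ZSpan.fundamentalDomain (torusBasis k), f (a + φ) := by
        simp only [setIntegral_congr_set fundamentalDomain_torusBasis_ae_eq, add_comm a]
    _ = ∫ φ in a +ᵥ ZSpan.fundamentalDomain (torusBasis k), f φ := htranslate.symm
    _ = ∫ φ in ZSpan.fundamentalDomain (torusBasis k), f φ :=
        (hD.vadd_of_comm a).setIntegral_eq hD hf.vadd_eq
    _ = ∫ φ in torusBox k, f φ := setIntegral_congr_set fundamentalDomain_torusBasis_ae_eq

theorem TorusPer.of_hasLineDerivAt {f f' : (Fin k → ℝ) → E} {ω : Fin k → ℝ} (hper : TorusPer f)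
    (hf : ∀ φ, HasLineDerivAt ℝ f (f' φ) φ ω) : TorusPer f' := fun φ n => by
  have hshift : HasLineDerivAt ℝ f (f' φ) (φ + fun i => 2 * π * (n i : ℝ)) ω := by
    simpa only [HasLineDerivAt, add_right_comm _ _ (_ • ω), hper _ n] using hf φ
  exact (hf _).unique hshift

theorem TorusPer.setIntegral_lineDeriv_eq_zero [CompleteSpace E] {f f' : (Fin k → ℝ) → E}
    {ω : Fin k → ℝ} (hper : TorusPer f) (hfc : Continuous f) (hf'c : Continuous f')
    (hf : ∀ φ, HasLineDerivAt ℝ f (f' φ) φ ω) : ∫ φ in torusBox k, f' φ = 0 := by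
  have hswap : IntegrableOn (Function.uncurry fun (t : ℝ) (φ : Fin k → ℝ) => f' (φ + t • ω))
      (uIoc 0 1 ×ˢ torusBox k) (volume.prod volume) :=
    ((by fun_prop : Continuous _).continuousOn.integrableOn_compact
      (isCompact_uIcc.prod (isCompact_torusBox k))).mono_set
        (prod_mono_left uIoc_subset_uIcc)
  calc ∫ φ in torusBox k, f' φ
      = ∫ t in (0 : ℝ)..1, ∫ φ in torusBox k, f' (φ + t • ω) := by
        simp [(hper.of_hasLineDerivAt hf).setIntegral_add_right]
    _ = ∫ φ in torusBox k, ∫ t in (0 : ℝ)..1, f' (φ + t • ω) :=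
        intervalIntegral_integral_swap (by rwa [Measure.prod_restrict])
    _ = ∫ φ in torusBox k, (f (φ + ω) - f φ) := by
        simp [intervalIntegral_lineDeriv hf hf'c]
    _ = 0 := by
        rw [integral_sub (integrableOn_torusBox (by fun_prop)) (integrableOn_torusBox hfc),
          hper.setIntegral_add_right, sub_self]

theorem TorusPer.eq_zero_of_setIntegral_eq_zero {f : (Fin k → ℝ) → ℝ} (hper : TorusPer f)
    (hf : Continuous f) (hf0 : 0 ≤ f) (hint : ∫ φ in torusBox k, f φ = 0) : f = 0 := by
  funext θ
  have hbox : torusBox k ⊆ closure (interior (torusBox k)) := by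
    rw [torusBox, ← pi_univ_Icc, interior_pi_set finite_univ, closure_pi_set]
    simp
  have hθ : Continuous fun φ => f (φ + θ) := by fun_prop
  have hae : (fun φ => f (φ + θ)) =ᵐ[volume.restrict (torusBox k)] 0 :=
    (integral_eq_zero_iff_of_nonneg (fun φ => hf0 (φ + θ)) (integrableOn_torusBox hθ)).1
      (by rw [hper.setIntegral_add_right, hint])
  have h0 : (0 : Fin k → ℝ) ∈ torusBox k := ⟨le_rfl, fun _ => two_pi_pos.le⟩
  simpa using Measure.eqOn_of_ae_eq hae hθ.continuousOn continuousOn_const hbox h0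

end Torus

/-! ### Trigonometric polynomials -/


section TrigPoly

variable {k : ℕ}

/-- The character `φ ↦ exp (i n·φ)` of the torus `𝕋^k` with frequency vector `n`. -/
noncomputable def torusChar (n : Fin k → ℤ) (φ : Fin k → ℝ) : ℂ :=
  Complex.exp ((∑ i, n i * φ i : ℝ) * Complex.I)

/-- The trigonometric polynomials on the torus `𝕋^k`. -/
noncomputable def trigPoly (k : ℕ) : Submodule ℂ ((Fin k → ℝ) → ℂ) :=
  Submodule.span ℂ (range torusChar)

theorem torusChar_mem_trigPoly (n : Fin k → ℤ) : torusChar n ∈ trigPoly k :=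
  Submodule.subset_span (mem_range_self n)

theorem torusChar_zero : torusChar (0 : Fin k → ℤ) = 1 := by
  ext φ
  simp [torusChar]

theorem torusPer_torusChar (n : Fin k → ℤ) : TorusPer (torusChar n) := fun φ l => by
  have hphase : ∑ i, n i * (φ i + 2 * π * l i) =
      ∑ i, n i * φ i + (∑ i, n i * l i : ℤ) * (2 * π) := by
    push_cast
    rw [Finset.sum_mul, ← Finset.sum_add_distrib]
    exact Finset.sum_congr rfl fun i _ => by ring
  simp only [torusChar, Pi.add_apply, hphase, Complex.ofReal_add, add_mul]
  convert Complex.exp_periodic.int_mul (∑ i, n i * l i) _ using 2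
  push_cast
  ring

theorem contDiff_torusChar (n : Fin k → ℤ) {r : WithTop ℕ∞} : ContDiff ℝ r (torusChar n) := by
  have hphase : ContDiff ℝ r fun φ : Fin k → ℝ => ∑ i, n i * φ i :=
    ContDiff.sum fun i _ => by fun_prop
  exact ((Complex.ofRealCLM.contDiff.comp hphase).mul contDiff_const).cexp

theorem hasLineDerivAt_torusChar (n : Fin k → ℤ) (ω φ : Fin k → ℝ) :
    HasLineDerivAt ℝ (torusChar n) ((∑ i, n i * ω i : ℝ) * Complex.I * torusChar n φ) φ ω := by
  have hphase (t : ℝ) : ∑ i, n i * (φ + t • ω) i = ∑ i, n i * φ i + t * ∑ i, n i * ω i := by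
    simp only [Pi.add_apply, Pi.smul_apply, smul_eq_mul, mul_add, Finset.sum_add_distrib,
      Finset.mul_sum, mul_left_comm t]
  have hlin : HasDerivAt (fun t : ℝ => ∑ i, n i * (φ + t • ω) i) (∑ i, n i * ω i) 0 := by
    simp only [hphase]
    exact (hasDerivAt_mul_const _).const_add _
  refine (hlin.ofReal_comp.mul_const Complex.I).cexp.congr_deriv ?_
  simp only [zero_smul, add_zero, torusChar, mul_comm]

theorem torusPer_of_mem_trigPoly {p : (Fin k → ℝ) → ℂ} (hp : p ∈ trigPoly k) : TorusPer p := by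
  intro φ n
  induction hp using Submodule.span_induction with
  | mem _ hx => obtain ⟨l, rfl⟩ := hx; exact torusPer_torusChar l φ n
  | zero => rfl
  | add _ _ _ _ hp hq => exact congrArg₂ (· + ·) hp hq
  | smul c _ _ hp => exact congrArg (c • ·) hp

theorem contDiff_of_mem_trigPoly {p : (Fin k → ℝ) → ℂ} (hp : p ∈ trigPoly k) {r : WithTop ℕ∞} :
    ContDiff ℝ r p := by
  induction hp using Submodule.span_induction with
  | mem _ hx => obtain ⟨n, rfl⟩ := hx; exact contDiff_torusChar n
  | zero => exact contDiff_const
  | add _ _ _ _ hp hq => exact hp.add hq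
  | smul c _ _ hp => exact contDiff_const.smul hp

theorem exists_norm_le_of_mem_trigPoly {p : (Fin k → ℝ) → ℂ} (hp : p ∈ trigPoly k) :
    ∃ C, ∀ φ, ‖p φ‖ ≤ C := by
  induction hp using Submodule.span_induction with
  | mem _ hx =>
    obtain ⟨n, rfl⟩ := hx
    exact ⟨1, fun φ => (Complex.norm_exp_ofReal_mul_I _).le⟩
  | zero => exact ⟨0, fun _ => norm_zero.le⟩
  | add _ _ _ _ hp hq =>
    obtain ⟨C, hC⟩ := hp
    obtain ⟨D, hD⟩ := hq
    exact ⟨C + D, fun φ => norm_add_le_of_le (hC φ) (hD φ)⟩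
  | smul c _ _ hp =>
    obtain ⟨C, hC⟩ := hp
    exact ⟨‖c‖ * C, fun φ => (norm_smul_le c _).trans (by gcongr; exact hC φ)⟩

/-- The covering map `ℝ^k → (ℝ/ℤ)^k`, `φ ↦ φ / 2π mod 1`, onto Mathlib's model of the torus. -/
noncomputable def toUnitAddTorus (k : ℕ) : C(Fin k → ℝ, UnitAddTorus (Fin k)) where
  toFun φ i := ((φ i / (2 * π) : ℝ) : UnitAddCircle)
  continuous_toFun := continuous_pi fun i =>
    (AddCircle.continuous_mk' 1).comp ((continuous_apply i).div_const _)

theorem isQuotientMap_toUnitAddTorus : IsQuotientMap (toUnitAddTorus k) := by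
  have hcircle : IsOpenQuotientMap fun x : ℝ => ((x / (2 * π) : ℝ) : UnitAddCircle) :=
    (QuotientAddGroup.isOpenQuotientMap_mk (N := AddSubgroup.zmultiples (1 : ℝ))).comp
      (Homeomorph.mulRight₀ (2 * π)⁻¹ (inv_ne_zero two_pi_pos.ne')).isOpenQuotientMap
  exact (IsOpenQuotientMap.piMap fun _ : Fin k => hcircle).isQuotientMap

theorem TorusPer.factorsThrough_toUnitAddTorus {E : Type*} {f : (Fin k → ℝ) → E}
    (hf : TorusPer f) : Function.FactorsThrough f (toUnitAddTorus k) := by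
  intro φ ψ h
  have hdiff (i : Fin k) : ∃ n : ℤ, φ i = ψ i + 2 * π * n := by
    obtain ⟨n, hn⟩ := AddSubgroup.mem_zmultiples_iff.1 (QuotientAddGroup.eq.1 (congrFun h i))
    refine ⟨-n, ?_⟩
    rw [zsmul_one, neg_add_eq_sub, ← sub_div, eq_div_iff two_pi_pos.ne'] at hn
    push_cast
    linarith
  choose n hn using hdiff
  rw [funext hn]
  exact hf ψ n

theorem mFourier_toUnitAddTorus (n : Fin k → ℤ) (φ : Fin k → ℝ) :
    UnitAddTorus.mFourier n (toUnitAddTorus k φ) = torusChar n φ := by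
  simp only [UnitAddTorus.mFourier, ContinuousMap.coe_mk, toUnitAddTorus, fourier_coe_apply,
    torusChar, ← Complex.exp_sum, Complex.ofReal_sum, Finset.sum_mul]
  refine congrArg _ (Finset.sum_congr rfl fun i _ => ?_)
  push_cast
  field_simp [Complex.ofReal_ne_zero.2 pi_ne_zero]

theorem comp_toUnitAddTorus_mem_trigPoly {P : C(UnitAddTorus (Fin k), ℂ)}
    (hP : P ∈ Submodule.span ℂ (range UnitAddTorus.mFourier)) :
    P ∘ toUnitAddTorus k ∈ trigPoly k := by
  induction hP using Submodule.span_induction with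
  | mem _ hx =>
    obtain ⟨n, rfl⟩ := hx
    rw [show UnitAddTorus.mFourier n ∘ toUnitAddTorus k = torusChar n from
      funext (mFourier_toUnitAddTorus n)]
    exact torusChar_mem_trigPoly n
  | zero => exact zero_mem _
  | add _ _ _ _ hp hq => exact add_mem hp hq
  | smul c _ _ hp => exact Submodule.smul_mem _ c hp

theorem TorusPer.exists_trigPoly_norm_sub_le {f : (Fin k → ℝ) → ℂ} (hper : TorusPer f)
    (hf : Continuous f) {ε : ℝ} (hε : 0 < ε) : ∃ p ∈ trigPoly k, ∀ φ, ‖f φ - p φ‖ ≤ ε := by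
  have hfac : Function.FactorsThrough (⟨f, hf⟩ : C(Fin k → ℝ, ℂ)) (toUnitAddTorus k) :=
    hper.factorsThrough_toUnitAddTorus
  set F := isQuotientMap_toUnitAddTorus.lift ⟨f, hf⟩ hfac
  have hF (φ : Fin k → ℝ) : F (toUnitAddTorus k φ) = f φ :=
    DFunLike.congr_fun (isQuotientMap_toUnitAddTorus.lift_comp ⟨f, hf⟩ hfac) φ
  have hmem : F ∈
      (Submodule.span ℂ (range UnitAddTorus.mFourier)).topologicalClosure :=
    UnitAddTorus.span_mFourier_closure_eq_top (d := Fin k) ▸ Submodule.mem_top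
  obtain ⟨P, hP, hFP⟩ := Metric.mem_closure_iff.1 hmem ε hε
  refine ⟨P ∘ toUnitAddTorus k, comp_toUnitAddTorus_mem_trigPoly hP, fun φ => ?_⟩
  rw [← hF, ← dist_eq_norm]
  exact (ContinuousMap.dist_apply_le_dist _).trans hFP.le

theorem TorusPer.eq_zero_of_setIntegral_mul_eq_zero {f : (Fin k → ℝ) → ℝ} (hper : TorusPer f)
    (hf : Continuous f) {r : WithTop ℕ∞}
    (hint : ∀ h : (Fin k → ℝ) → ℝ, TorusPer h → ContDiff ℝ r h →
      ∫ φ in torusBox k, f φ * h φ = 0) : f = 0 := by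
  have hbound (ε : ℝ) (hε : 0 < ε) :
      ∫ φ in torusBox k, f φ * f φ ≤ ε * ∫ φ in torusBox k, |f φ| := by
    obtain ⟨p, hp, hfp⟩ := TorusPer.exists_trigPoly_norm_sub_le (f := fun φ => (f φ : ℂ))
      (hper.comp _) (Complex.continuous_ofReal.comp hf) hε
    have hre (φ : Fin k → ℝ) : |f φ - (p φ).re| ≤ ε := by
      simpa using (Complex.abs_re_le_norm _).trans (hfp φ)
    have hpre : ContDiff ℝ r fun φ => (p φ).re :=
      Complex.reCLM.contDiff.comp (contDiff_of_mem_trigPoly hp)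
    have hpc : Continuous fun φ => (p φ).re := hpre.continuous
    rw [← sub_zero (∫ φ in torusBox k, f φ * f φ),
      ← hint (fun φ => (p φ).re) ((torusPer_of_mem_trigPoly hp).comp _) hpre,
      ← integral_sub (integrableOn_torusBox (by fun_prop)) (integrableOn_torusBox (by fun_prop)),
      ← integral_const_mul]
    refine integral_mono (integrableOn_torusBox (by fun_prop))
      (integrableOn_torusBox (by fun_prop)) fun φ => ?_
    calc f φ * f φ - f φ * (p φ).re ≤ |f φ * (f φ - (p φ).re)| := by
          rw [mul_sub]; exact le_abs_self _
      _ ≤ ε * |f φ| := by rw [abs_mul, mul_comm]; gcongr; exact hre φ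
  have hsq : ∫ φ in torusBox k, f φ * f φ = 0 := by
    have hlim : Tendsto (fun ε : ℝ => ε * ∫ φ in torusBox k, |f φ|) (𝓝[>] 0) (𝓝 0) := by
      have := (continuous_mul_const (∫ φ in torusBox k, |f φ|)).tendsto 0
      rw [zero_mul] at this
      exact this.mono_left nhdsWithin_le_nhds
    exact le_antisymm (ge_of_tendsto hlim (eventually_mem_nhdsWithin.mono hbound))
      (integral_nonneg fun φ => mul_self_nonneg _)
  have hzero := TorusPer.eq_zero_of_setIntegral_eq_zero (f := fun φ => f φ * f φ)
    (hper.comp fun x => x * x) (by fun_prop) (fun φ => mul_self_nonneg _) hsq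
  exact funext fun φ => mul_self_eq_zero.1 (congrFun hzero φ)

theorem TorusPer.eq_zero_of_setIntegral_dotProduct_eq_zero {ι : Type*} [Fintype ι]
    {f : (Fin k → ℝ) → ι → ℝ} (hper : TorusPer f) (hf : Continuous f) {r : WithTop ℕ∞}
    (hint : ∀ h : (Fin k → ℝ) → ι → ℝ, TorusPer h → ContDiff ℝ r h →
      ∫ φ in torusBox k, f φ ⬝ᵥ h φ = 0) : f = 0 := by
  classical
  have hcoord (i : ι) : (fun φ => f φ i) = 0 :=
    (hper.comp (· i)).eq_zero_of_setIntegral_mul_eq_zero (r := r) (by fun_prop) fun η hη hηr => by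
      simpa only [dotProduct_single] using hint (fun φ => Pi.single i (η φ)) (hη.comp _)
        ((ContinuousLinearMap.single ℝ (fun _ : ι => ℝ) i).contDiff.comp hηr)
  exact funext fun φ => funext fun i => congrFun (hcoord i) φ

end TrigPoly

/-! ### Equidistribution of orbits -/

section Orbit

variable {k : ℕ} {ω : Fin k → ℝ}

theorem sum_intCast_mul_ne_zero (hω : LinearIndependent ℚ ω) {n : Fin k → ℤ} (hn : n ≠ 0) :
    ∑ i, n i * ω i ≠ 0 := fun h0 => by
  have hsum : ∑ i, (n i : ℚ) • ω i = 0 := by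
    simpa only [Rat.smul_def, Rat.cast_intCast] using h0
  exact hn (funext fun i => Int.cast_eq_zero.1 (Fintype.linearIndependent_iff.1 hω _ hsum i))

theorem exists_hasLineDerivAt_of_mem_trigPoly (hω : LinearIndependent ℚ ω)
    {p : (Fin k → ℝ) → ℂ} (hp : p ∈ trigPoly k) :
    ∃ c, ∃ q ∈ trigPoly k, ∀ φ, HasLineDerivAt ℝ q (p φ - c) φ ω := by
  induction hp using Submodule.span_induction with
  | mem _ hx =>
    obtain ⟨n, rfl⟩ := hx
    obtain rfl | hn := eq_or_ne n 0
    · refine ⟨1, 0, zero_mem _, fun φ => ?_⟩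
      rw [torusChar_zero, Pi.one_apply, sub_self]
      exact hasDerivAt_const (0 : ℝ) (0 : ℂ)
    · set ν : ℂ := (∑ i, n i * ω i : ℝ) * Complex.I
      have hν : ν ≠ 0 :=
        mul_ne_zero (Complex.ofReal_ne_zero.2 (sum_intCast_mul_ne_zero hω hn)) Complex.I_ne_zero
      refine ⟨0, ν⁻¹ • torusChar n, Submodule.smul_mem _ _ (torusChar_mem_trigPoly n), fun φ => ?_⟩
      rw [sub_zero, ← inv_smul_smul₀ hν (torusChar n φ)]
      exact (hasLineDerivAt_torusChar n ω φ).const_smul _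
  | zero =>
    refine ⟨0, 0, zero_mem _, fun φ => ?_⟩
    rw [Pi.zero_apply, sub_self]
    exact hasDerivAt_const (0 : ℝ) (0 : ℂ)
  | add _ _ _ _ hp₁ hp₂ =>
    obtain ⟨c₁, q₁, hq₁, hd₁⟩ := hp₁
    obtain ⟨c₂, q₂, hq₂, hd₂⟩ := hp₂
    refine ⟨c₁ + c₂, q₁ + q₂, add_mem hq₁ hq₂, fun φ => ?_⟩
    rw [Pi.add_apply, add_sub_add_comm]
    exact (hd₁ φ).add (hd₂ φ)
  | smul a _ _ hp =>
    obtain ⟨c, q, hq, hd⟩ := hp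
    refine ⟨a • c, a • q, Submodule.smul_mem _ a hq, fun φ => ?_⟩
    rw [Pi.smul_apply, ← smul_sub]
    exact (hd φ).const_smul a

theorem volume_torusBox_ne_top : volume (torusBox k) ≠ ⊤ := (isCompact_torusBox k).measure_ne_top

theorem volume_torusBox_ne_zero : volume (torusBox k) ≠ 0 := by
  simp [torusBox, Real.volume_Icc_pi, pi_pos]

theorem tendsto_intervalAverage_of_mem_trigPoly (hω : LinearIndependent ℚ ω)
    {p : (Fin k → ℝ) → ℂ} (hp : p ∈ trigPoly k) (φ : Fin k → ℝ) :
    Tendsto (fun T : ℝ => ⨍ t in 0..T, p (φ + t • ω)) atTop (𝓝 (⨍ ψ in torusBox k, p ψ)) := by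
  obtain ⟨c, q, hq, hd⟩ := exists_hasLineDerivAt_of_mem_trigPoly hω hp
  have hpc : Continuous p := (contDiff_of_mem_trigPoly hp (r := 0)).continuous
  have hqc : Continuous q := (contDiff_of_mem_trigPoly hq (r := 0)).continuous
  obtain ⟨C, hC⟩ := exists_norm_le_of_mem_trigPoly hq
  have hmean : ⨍ ψ in torusBox k, p ψ = c := by
    have hint := (torusPer_of_mem_trigPoly hq).setIntegral_lineDeriv_eq_zero hqc (by fun_prop) hd
    rw [integral_sub (integrableOn_torusBox hpc) (integrableOn_torusBox continuous_const),
      sub_eq_zero] at hint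
    rw [setAverage_eq, hint, ← setAverage_eq,
      setAverage_const volume_torusBox_ne_zero volume_torusBox_ne_top]
  exact hmean ▸ tendsto_intervalAverage_of_hasLineDerivAt hd hpc hC φ

theorem TorusPer.tendsto_intervalAverage (hω : LinearIndependent ℚ ω) {f : (Fin k → ℝ) → ℂ}
    (hper : TorusPer f) (hf : Continuous f) (φ : Fin k → ℝ) :
    Tendsto (fun T : ℝ => ⨍ t in 0..T, f (φ + t • ω)) atTop (𝓝 (⨍ ψ in torusBox k, f ψ)) := by
  refine Metric.tendsto_nhds.2 fun ε hε => ?_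
  obtain ⟨p, hp, hfp⟩ := hper.exists_trigPoly_norm_sub_le hf (show 0 < ε / 3 by positivity)
  have hpc : Continuous p := (contDiff_of_mem_trigPoly hp (r := 0)).continuous
  have hspace : dist (⨍ ψ in torusBox k, p ψ) (⨍ ψ in torusBox k, f ψ) ≤ ε / 3 := by
    rw [dist_comm, dist_eq_norm]
    exact norm_setAverage_sub_setAverage_le (by positivity) volume_torusBox_ne_top
      (integrableOn_torusBox hf) (integrableOn_torusBox hpc) fun ψ _ => hfp ψ
  have htime (T : ℝ) :
      dist (⨍ t in 0..T, f (φ + t • ω)) (⨍ t in 0..T, p (φ + t • ω)) ≤ ε / 3 := by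
    rw [dist_eq_norm]
    exact norm_setAverage_sub_setAverage_le (by positivity) (by simp)
      (Continuous.integrableOn_uIoc (by fun_prop)) (Continuous.integrableOn_uIoc (by fun_prop))
      fun t _ => hfp _
  filter_upwards [Metric.tendsto_nhds.1 (tendsto_intervalAverage_of_mem_trigPoly hω hp φ) (ε / 3)
    (by positivity)] with T hT
  linarith [htime T, dist_triangle4 (⨍ t in 0..T, f (φ + t • ω)) (⨍ t in 0..T, p (φ + t • ω))
    (⨍ ψ in torusBox k, p ψ) (⨍ ψ in torusBox k, f ψ)]

theorem TorusPer.eq_zero_of_forall_orbit_eq_zero {E : Type*} [NormedAddCommGroup E]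
    (hω : LinearIndependent ℚ ω) {f : (Fin k → ℝ) → E} (hper : TorusPer f) (hf : Continuous f)
    (h0 : ∀ t : ℝ, f (t • ω) = 0) : f = 0 := by
  have hlim := TorusPer.tendsto_intervalAverage hω (f := fun φ => (‖f φ‖ : ℂ))
    (hper.comp fun x => (‖x‖ : ℂ)) (Complex.continuous_ofReal.comp hf.norm) 0
  have hmean : ⨍ φ in torusBox k, (‖f φ‖ : ℂ) = 0 := by
    refine tendsto_nhds_unique hlim (tendsto_const_nhds.congr fun T => ?_)
    simp [h0]
  have hint : ∫ φ in torusBox k, ‖f φ‖ = 0 := by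
    rw [setAverage_eq, integral_complex_ofReal] at hmean
    simpa [measureReal_eq_zero_iff volume_torusBox_ne_top, volume_torusBox_ne_zero] using hmean
  have hnorm := TorusPer.eq_zero_of_setIntegral_eq_zero (f := fun φ => ‖f φ‖) (hper.comp _) hf.norm
    (fun φ => norm_nonneg (f φ)) hint
  exact funext fun φ => norm_eq_zero.1 (congrFun hnorm φ)

end Orbit

/-! ### The Levi-Civita connection -/

section Metric

variable {m : ℕ} {g : (Fin m → ℝ) → Matrix (Fin m) (Fin m) ℝ} {U : Set (Fin m → ℝ)}
  {x : Fin m → ℝ}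

theorem fderiv_eq_sum_pd (f : (Fin m → ℝ) → ℝ) (x v : Fin m → ℝ) :
    fderiv ℝ f x v = ∑ l, pd f x l * v l := by
  conv_lhs => rw [pi_eq_sum_univ' v]
  simp only [map_sum, map_smul, smul_eq_mul, pd, mul_comm]

/-- The derivative `D_v g(x)` of a metric tensor `g` at `x` in direction `v`, taken entrywise
because `Matrix` carries no canonical norm. -/
noncomputable def metricDeriv (g : (Fin m → ℝ) → Matrix (Fin m) (Fin m) ℝ) (x v : Fin m → ℝ) :
    Matrix (Fin m) (Fin m) ℝ :=
  Matrix.of fun i j => fderiv ℝ (fun y => g y i j) x v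

theorem isSymm_metricDeriv (hU : IsOpen U) (hg : ∀ y ∈ U, (g y).IsSymm) (hx : x ∈ U)
    (v : Fin m → ℝ) : (metricDeriv g x v).IsSymm := by
  refine Matrix.IsSymm.ext fun i j => ?_
  have hentry : (fun y => g y j i) =ᶠ[𝓝 x] fun y => g y i j :=
    eventually_of_mem (hU.mem_nhds hx) fun y hy => (hg y hy).apply i j
  exact DFunLike.congr_fun (hentry.fderiv_eq (𝕜 := ℝ)) v

theorem dotProduct_metricDeriv_mulVec (a b c : Fin m → ℝ) :
    a ⬝ᵥ metricDeriv g x c *ᵥ b =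
      ∑ i, ∑ j, ∑ l, pd (fun y => g y i j) x l * a i * b j * c l := by
  simp only [dotProduct, mulVec, metricDeriv, of_apply, fderiv_eq_sum_pd, Finset.mul_sum,
    Finset.sum_mul]
  exact Finset.sum_congr rfl fun i _ => Finset.sum_congr rfl fun j _ =>
    Finset.sum_congr rfl fun l _ => by ring

/-- The Christoffel map of the first kind, i.e. `christoffel` with its index lowered by `g`. -/
noncomputable def christoffelFirst (g : (Fin m → ℝ) → Matrix (Fin m) (Fin m) ℝ)
    (x a b : Fin m → ℝ) : Fin m → ℝ :=
  fun l => (1 / 2) * ∑ j, ∑ k, (pd (fun y => g y l k) x j + pd (fun y => g y j l) x k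
    - pd (fun y => g y j k) x l) * a j * b k

theorem mulVec_christoffel (hx : IsUnit (g x).det) (a b : Fin m → ℝ) :
    g x *ᵥ christoffel g x a b = christoffelFirst g x a b := by
  have hraise : christoffel g x a b = (g x)⁻¹ *ᵥ christoffelFirst g x a b := by
    funext i
    simp only [christoffel, christoffelFirst, mulVec, dotProduct,
      mul_left_comm ((g x)⁻¹ _ _) (1 / 2)]
    exact Finset.mul_sum ..
  rw [hraise, mulVec_mulVec, mul_nonsing_inv _ hx, one_mulVec]

theorem christoffelFirst_koszul (a b c : Fin m → ℝ) :
    christoffelFirst g x a b ⬝ᵥ c = (1 / 2) * (c ⬝ᵥ metricDeriv g x a *ᵥ b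
      + a ⬝ᵥ metricDeriv g x b *ᵥ c - a ⬝ᵥ metricDeriv g x c *ᵥ b) := by
  simp only [dotProduct_metricDeriv_mulVec]
  have h₁ : ∑ i, ∑ j, ∑ l, pd (fun y => g y i j) x l * c i * b j * a l =
      ∑ l, ∑ j, ∑ k, pd (fun y => g y l k) x j * c l * b k * a j :=
    Finset.sum_congr rfl fun _ _ => Finset.sum_comm
  have h₂ : ∑ i, ∑ j, ∑ l, pd (fun y => g y i j) x l * a i * c j * b l =
      ∑ l, ∑ j, ∑ k, pd (fun y => g y j l) x k * a j * c l * b k :=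
    Finset.sum_comm
  have h₃ : ∑ i, ∑ j, ∑ l, pd (fun y => g y i j) x l * a i * b j * c l =
      ∑ l, ∑ j, ∑ k, pd (fun y => g y j k) x l * a j * b k * c l :=
    (Finset.sum_congr rfl fun _ _ => Finset.sum_comm).trans Finset.sum_comm
  rw [h₁, h₂, h₃]
  simp only [dotProduct, christoffelFirst, mul_assoc, Finset.mul_sum, Finset.sum_mul,
    ← Finset.sum_add_distrib, ← Finset.sum_sub_distrib]
  exact Finset.sum_congr rfl fun l _ => Finset.sum_congr rfl fun j _ =>
    Finset.sum_congr rfl fun k _ => by ring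

theorem christoffelFirst_metric_compatibility (a b c : Fin m → ℝ)
    (ha : (metricDeriv g x a).IsSymm) :
    christoffelFirst g x a b ⬝ᵥ c + christoffelFirst g x a c ⬝ᵥ b =
      metricDeriv g x a *ᵥ b ⬝ᵥ c := by
  have hsymm : b ⬝ᵥ metricDeriv g x a *ᵥ c = c ⬝ᵥ metricDeriv g x a *ᵥ b := by
    rw [dotProduct_mulVec, ← mulVec_transpose, ha.eq, dotProduct_comm]
  rw [christoffelFirst_koszul, christoffelFirst_koszul, hsymm, dotProduct_comm _ c]
  ring

variable {X : Type*} [TopologicalSpace X] {u a b : X → Fin m → ℝ}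

theorem continuous_metric_comp (hg : ∀ i j, ContinuousOn (fun y => g y i j) U)
    (hu : Continuous u) (huU : ∀ φ, u φ ∈ U) : Continuous fun φ => g (u φ) :=
  continuous_matrix fun i j => (hg i j).comp_continuous hu huU

theorem continuous_pd_comp {f : (Fin m → ℝ) → ℝ} (hU : IsOpen U) (hf : ContDiffOn ℝ 1 f U)
    (hu : Continuous u) (huU : ∀ φ, u φ ∈ U) (l : Fin m) : Continuous fun φ => pd f (u φ) l :=
  ((hf.continuousOn_fderiv_of_isOpen hU le_rfl).comp_continuous hu huU).clm_apply continuous_const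

theorem continuous_christoffelFirst_comp (hU : IsOpen U)
    (hg : ∀ i j, ContDiffOn ℝ 1 (fun y => g y i j) U) (hu : Continuous u) (huU : ∀ φ, u φ ∈ U)
    (ha : Continuous a) (hb : Continuous b) :
    Continuous fun φ => christoffelFirst g (u φ) (a φ) (b φ) := by
  have hpd (i j l : Fin m) : Continuous fun φ => pd (fun y => g y i j) (u φ) l :=
    continuous_pd_comp hU (hg i j) hu huU l
  unfold christoffelFirst
  fun_prop

theorem continuous_metricDeriv_comp (hU : IsOpen U)
    (hg : ∀ i j, ContDiffOn ℝ 1 (fun y => g y i j) U) (hu : Continuous u) (huU : ∀ φ, u φ ∈ U)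
    (ha : Continuous a) : Continuous fun φ => metricDeriv g (u φ) (a φ) :=
  continuous_matrix fun i j =>
    (((hg i j).continuousOn_fderiv_of_isOpen hU le_rfl).comp_continuous hu huU).clm_apply ha

theorem hasLineDerivAt_metric_comp {V : Type*} [AddCommGroup V] [Module ℝ V] {y v : V}
    {u : V → Fin m → ℝ} {u' : Fin m → ℝ} {i j : Fin m}
    (hg : DifferentiableAt ℝ (fun x => g x i j) (u y)) (hu : HasLineDerivAt ℝ u u' y v) :
    HasLineDerivAt ℝ (fun z => g (u z) i j) (metricDeriv g (u y) u' i j) y v :=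
  HasFDerivAt.comp_hasDerivAt_of_eq 0 hg.hasFDerivAt hu (by simp)

end Metric

section ProductRule

variable {𝕜 V ι κ : Type*} [NontriviallyNormedField 𝕜] [AddCommGroup V] [Module 𝕜 V]
  [Fintype ι] [Fintype κ] {x v : V}

theorem hasLineDerivAt_dotProduct {a b : V → ι → 𝕜} {a' b' : ι → 𝕜}
    (ha : HasLineDerivAt 𝕜 a a' x v) (hb : HasLineDerivAt 𝕜 b b' x v) :
    HasLineDerivAt 𝕜 (fun y => a y ⬝ᵥ b y) (a' ⬝ᵥ b x + a x ⬝ᵥ b') x v := by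
  have hterm (i : ι) := (hasDerivAt_pi.1 ha i).fun_mul (hasDerivAt_pi.1 hb i)
  simpa only [zero_smul, add_zero, Finset.sum_add_distrib, HasLineDerivAt, dotProduct] using
    HasDerivAt.fun_sum fun i (_ : i ∈ Finset.univ) => hterm i

theorem hasLineDerivAt_mulVec {A : V → Matrix κ ι 𝕜} {A' : Matrix κ ι 𝕜} {b : V → ι → 𝕜}
    {b' : ι → 𝕜} (hA : ∀ i j, HasLineDerivAt 𝕜 (fun y => A y i j) (A' i j) x v)
    (hb : HasLineDerivAt 𝕜 b b' x v) :
    HasLineDerivAt 𝕜 (fun y => A y *ᵥ b y) (A' *ᵥ b x + A x *ᵥ b') x v :=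
  hasDerivAt_pi.2 fun i =>
    have hrow : HasLineDerivAt 𝕜 (fun y => A y i) (A' i) x v := hasDerivAt_pi.2 (hA i)
    hasLineDerivAt_dotProduct hrow hb

end ProductRule

/-! ### The weak variational identity -/

section WeakForm

variable {k m : ℕ} {ω : Fin k → ℝ}

/-- Functions on the torus `𝕋^k` that are continuous and continuously differentiable in the single
direction `ω`, the regularity required of quasiperiodic solutions and of their velocities. -/
structure TorusC1Along {E : Type*} [NormedAddCommGroup E] [NormedSpace ℝ E] (ω : Fin k → ℝ)
    (f : (Fin k → ℝ) → E) : Prop where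
  torusPer : TorusPer f
  continuous : Continuous f
  lineDifferentiableAt : ∀ φ, LineDifferentiableAt ℝ f φ ω
  continuous_dirDeriv : Continuous (dirDeriv ω f)

section

variable {E : Type*} [NormedAddCommGroup E] [NormedSpace ℝ E] {f : (Fin k → ℝ) → E}

theorem TorusC1Along.hasLineDerivAt (hf : TorusC1Along ω f) (φ : Fin k → ℝ) :
    HasLineDerivAt ℝ f (dirDeriv ω f φ) φ ω :=
  (hf.lineDifferentiableAt φ).hasLineDerivAt

theorem TorusC1Along.torusPer_dirDeriv (hf : TorusC1Along ω f) : TorusPer (dirDeriv ω f) :=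
  hf.torusPer.of_hasLineDerivAt hf.hasLineDerivAt

theorem TorusC1Along.of_hasLineDerivAt {f' : (Fin k → ℝ) → E} (hper : TorusPer f)
    (hf : Continuous f) (hf' : Continuous f') (hd : ∀ φ, HasLineDerivAt ℝ f (f' φ) φ ω) :
    TorusC1Along ω f where
  torusPer := hper
  continuous := hf
  lineDifferentiableAt φ := (hd φ).lineDifferentiableAt
  continuous_dirDeriv := by rwa [show dirDeriv ω f = f' from funext fun φ => (hd φ).lineDeriv]

theorem TorusC1Along.deriv_orbit (hf : TorusC1Along ω f) :
    deriv (fun t : ℝ => f (t • ω)) = fun t => dirDeriv ω f (t • ω) :=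
  funext fun t => by simpa using (hasDerivAt_add_smul hf.hasLineDerivAt 0 t).deriv

theorem TorusPer.torusC1Along (hper : TorusPer f) (hf : ContDiff ℝ 1 f) : TorusC1Along ω f :=
  .of_hasLineDerivAt hper hf.continuous
    ((hf.continuous_fderiv one_ne_zero).clm_apply continuous_const)
    fun φ => (hf.differentiable one_ne_zero φ).hasFDerivAt.hasLineDerivAt ω

theorem TorusC1Along.setIntegral_dirDeriv_eq_zero [CompleteSpace E] (hf : TorusC1Along ω f) :
    ∫ φ in torusBox k, dirDeriv ω f φ = 0 :=
  hf.torusPer.setIntegral_lineDeriv_eq_zero hf.continuous hf.continuous_dirDeriv hf.hasLineDerivAt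

end

theorem TorusC1Along.dirDeriv_dotProduct {ι : Type*} [Fintype ι] {a b : (Fin k → ℝ) → ι → ℝ}
    (ha : TorusC1Along ω a) (hb : TorusC1Along ω b) (φ : Fin k → ℝ) :
    dirDeriv ω (fun φ => a φ ⬝ᵥ b φ) φ = dirDeriv ω a φ ⬝ᵥ b φ + a φ ⬝ᵥ dirDeriv ω b φ :=
  (hasLineDerivAt_dotProduct (ha.hasLineDerivAt φ) (hb.hasLineDerivAt φ)).lineDeriv

theorem TorusC1Along.dotProduct {ι : Type*} [Fintype ι] {a b : (Fin k → ℝ) → ι → ℝ}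
    (ha : TorusC1Along ω a) (hb : TorusC1Along ω b) : TorusC1Along ω fun φ => a φ ⬝ᵥ b φ :=
  .of_hasLineDerivAt (fun φ n => by simp only [ha.torusPer φ n, hb.torusPer φ n])
    (ha.continuous.dotProduct hb.continuous)
    ((ha.continuous_dirDeriv.dotProduct hb.continuous).add
      (ha.continuous.dotProduct hb.continuous_dirDeriv))
    fun φ => hasLineDerivAt_dotProduct (ha.hasLineDerivAt φ) (hb.hasLineDerivAt φ)

variable {U : Set (Fin m → ℝ)} {g : (Fin m → ℝ) → Matrix (Fin m) (Fin m) ℝ}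
  {F u h : (Fin k → ℝ) → Fin m → ℝ} {φ : Fin k → ℝ}

/-- The momentum `g(u) D_ω u` conjugate to the velocity `D_ω u` of a torus map `u`. -/
noncomputable def momentum (ω : Fin k → ℝ) (g : (Fin m → ℝ) → Matrix (Fin m) (Fin m) ℝ)
    (u : (Fin k → ℝ) → Fin m → ℝ) (φ : Fin k → ℝ) : Fin m → ℝ :=
  g (u φ) *ᵥ dirDeriv ω u φ

/-- The Euler–Lagrange residual `g(u) D_ω²u + gΓ_u(D_ω u, D_ω u) − F` of a torus map `u` under a
force covector field `F`; its index is lowered, so that it pairs with test functions through the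
Euclidean dot product. -/
noncomputable def elResidual (ω : Fin k → ℝ) (g : (Fin m → ℝ) → Matrix (Fin m) (Fin m) ℝ)
    (F u : (Fin k → ℝ) → Fin m → ℝ) (φ : Fin k → ℝ) : Fin m → ℝ :=
  g (u φ) *ᵥ dirDeriv ω (dirDeriv ω u) φ
    + christoffelFirst g (u φ) (dirDeriv ω u φ) (dirDeriv ω u φ) - F φ

/-- The integrand of the weak variational identity at a torus map `u`, tested against `h`. -/
noncomputable def weakIntegrand (ω : Fin k → ℝ) (g : (Fin m → ℝ) → Matrix (Fin m) (Fin m) ℝ)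
    (F u h : (Fin k → ℝ) → Fin m → ℝ) (φ : Fin k → ℝ) : ℝ :=
  dotp (momentum ω g u φ) (dirDeriv ω h φ + christoffel g (u φ) (dirDeriv ω u φ) (h φ))
    + dotp (F φ) (h φ)

theorem elResidual_eq_zero_iff (hdet : IsUnit (g (u φ)).det) :
    elResidual ω g F u φ = 0 ↔
      dirDeriv ω (dirDeriv ω u) φ + christoffel g (u φ) (dirDeriv ω u φ) (dirDeriv ω u φ)
        = (g (u φ))⁻¹ *ᵥ F φ := by
  rw [elResidual, ← mulVec_christoffel hdet, ← mulVec_add, sub_eq_zero]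
  constructor
  · intro h
    rw [← h, mulVec_mulVec, nonsing_inv_mul _ hdet, one_mulVec]
  · intro h
    rw [h, mulVec_mulVec, mul_nonsing_inv _ hdet, one_mulVec]

section

variable (hU : IsOpen U) (hg : ∀ i j, ContDiffOn ℝ 1 (fun y => g y i j) U)
  (huU : ∀ φ, u φ ∈ U) (hu : TorusC1Along ω u) (hv : TorusC1Along ω (dirDeriv ω u))
include hU hg huU hu hv

theorem hasLineDerivAt_momentum (φ : Fin k → ℝ) :
    HasLineDerivAt ℝ (momentum ω g u) (metricDeriv g (u φ) (dirDeriv ω u φ) *ᵥ dirDeriv ω u φ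
      + g (u φ) *ᵥ dirDeriv ω (dirDeriv ω u) φ) φ ω :=
  hasLineDerivAt_mulVec (fun i j => hasLineDerivAt_metric_comp
    (((hg i j).contDiffAt (hU.mem_nhds (huU φ))).differentiableAt one_ne_zero)
    (hu.hasLineDerivAt φ)) (hv.hasLineDerivAt φ)

theorem torusC1Along_momentum : TorusC1Along ω (momentum ω g u) := by
  have hgu := continuous_metric_comp (fun i j => (hg i j).continuousOn) hu.continuous huU
  have hDg := continuous_metricDeriv_comp hU hg hu.continuous huU hv.continuous
  refine .of_hasLineDerivAt (fun φ n => ?_) (hgu.matrix_mulVec hv.continuous)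
    ((hDg.matrix_mulVec hv.continuous).add (hgu.matrix_mulVec hv.continuous_dirDeriv))
    (hasLineDerivAt_momentum hU hg huU hu hv)
  simp only [momentum, hu.torusPer φ n, hv.torusPer φ n]

theorem continuous_elResidual (hF : Continuous F) : Continuous (elResidual ω g F u) := by
  have hgu := continuous_metric_comp (fun i j => (hg i j).continuousOn) hu.continuous huU
  have hΓ := continuous_christoffelFirst_comp hU hg hu.continuous huU hv.continuous hv.continuous
  exact ((hgu.matrix_mulVec hv.continuous_dirDeriv).add hΓ).sub hF

variable (hsymm : ∀ x ∈ U, (g x).IsSymm) (hdet : ∀ x ∈ U, IsUnit (g x).det)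
  (hh : TorusC1Along ω h)
include hsymm hdet hh

theorem weakIntegrand_eq_dirDeriv_sub (φ : Fin k → ℝ) :
    weakIntegrand ω g F u h φ =
      dirDeriv ω (fun φ => momentum ω g u φ ⬝ᵥ h φ) φ - elResidual ω g F u φ ⬝ᵥ h φ := by
  set v := dirDeriv ω u
  have hmomentum : dirDeriv ω (momentum ω g u) φ =
      metricDeriv g (u φ) (v φ) *ᵥ v φ + g (u φ) *ᵥ dirDeriv ω v φ :=
    (hasLineDerivAt_momentum hU hg huU hu hv φ).lineDeriv
  have hlower : momentum ω g u φ ⬝ᵥ christoffel g (u φ) (v φ) (h φ) =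
      christoffelFirst g (u φ) (v φ) (h φ) ⬝ᵥ v φ := by
    rw [← mulVec_christoffel (hdet _ (huU φ)), dotProduct_comm _ (v φ), dotProduct_mulVec,
      ← mulVec_transpose, hsymm _ (huU φ), momentum]
  have hcompat := christoffelFirst_metric_compatibility (v φ) (v φ) (h φ)
    (isSymm_metricDeriv hU hsymm (huU φ) (v φ))
  change momentum ω g u φ ⬝ᵥ (dirDeriv ω h φ + christoffel g (u φ) (v φ) (h φ)) + F φ ⬝ᵥ h φ = _
  rw [(torusC1Along_momentum hU hg huU hu hv).dirDeriv_dotProduct hh, hmomentum, dotProduct_add,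
    hlower]
  simp only [elResidual, add_dotProduct, sub_dotProduct]
  linarith

theorem setIntegral_weakIntegrand (hF : Continuous F) :
    ∫ φ in torusBox k, weakIntegrand ω g F u h φ =
      -∫ φ in torusBox k, elResidual ω g F u φ ⬝ᵥ h φ := by
  have hJ : TorusC1Along ω fun φ => momentum ω g u φ ⬝ᵥ h φ :=
    (torusC1Along_momentum hU hg huU hu hv).dotProduct hh
  have hres : Continuous fun φ => elResidual ω g F u φ ⬝ᵥ h φ :=
    (continuous_elResidual hU hg huU hu hv hF).dotProduct hh.continuous
  simp only [weakIntegrand_eq_dirDeriv_sub hU hg huU hu hv hsymm hdet hh]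
  rw [integral_sub (integrableOn_torusBox hJ.continuous_dirDeriv) (integrableOn_torusBox hres),
    hJ.setIntegral_dirDeriv_eq_zero, zero_sub]

end

theorem torusPer_elResidual (hFper : TorusPer F) (hu : TorusC1Along ω u)
    (hv : TorusC1Along ω (dirDeriv ω u)) : TorusPer (elResidual ω g F u) := fun φ n => by
  simp only [elResidual, hu.torusPer φ n, hFper φ n, hv.torusPer φ n, hv.torusPer_dirDeriv φ n]

end WeakForm

section Gradient

variable {k m : ℕ} {U : Set (Fin m → ℝ)} {W : (Fin k → ℝ) → (Fin m → ℝ) → ℝ}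
  {u : (Fin k → ℝ) → Fin m → ℝ}

theorem torusPer_gradW_comp (hW : ∀ x, TorusPer fun φ => W φ x) (hu : TorusPer u) :
    TorusPer fun φ => gradW W φ (u φ) := fun φ n => by
  have hWn : W (φ + fun i => 2 * π * (n i : ℝ)) = W φ := funext fun x => hW x φ n
  simp only [hu φ n]
  unfold gradW
  rw [hWn]

theorem continuous_gradW_comp (hU : IsOpen U)
    (hW : ContDiffOn ℝ 1 (fun p : (Fin k → ℝ) × (Fin m → ℝ) => W p.1 p.2) (univ ×ˢ U))
    (hu : Continuous u) (huU : ∀ φ, u φ ∈ U) : Continuous fun φ => gradW W φ (u φ) := by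
  have hopen : IsOpen ((univ : Set (Fin k → ℝ)) ×ˢ U) := isOpen_univ.prod hU
  have hpartial (φ : Fin k → ℝ) (i : Fin m) : gradW W φ (u φ) i =
      fderiv ℝ (fun p : (Fin k → ℝ) × (Fin m → ℝ) => W p.1 p.2) (φ, u φ) (0, Pi.single i 1) := by
    have hd := (hW.contDiffAt (hopen.mem_nhds (mk_mem_prod (mem_univ φ) (huU φ))))
      |>.differentiableAt one_ne_zero
    exact DFunLike.congr_fun (hd.hasFDerivAt.comp (u φ) (hasFDerivAt_prodMk_right φ (u φ))).fderiv _
  refine continuous_pi fun i => ?_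
  simp only [hpartial]
  exact ((hW.continuousOn_fderiv_of_isOpen hopen le_rfl).comp_continuous
    (continuous_id.prodMk hu) fun φ => ⟨mem_univ φ, huU φ⟩).clm_apply continuous_const

end Gradient

theorem stmt0_general {k m : ℕ} {ω : Fin k → ℝ} (hω : LinearIndependent ℚ ω)
    {U : Set (Fin m → ℝ)} (hU : IsOpen U) {g : (Fin m → ℝ) → Matrix (Fin m) (Fin m) ℝ}
    (hg : ∀ i j, ContDiffOn ℝ 1 (fun y => g y i j) U) (hsymm : ∀ x ∈ U, (g x).IsSymm)
    (hdet : ∀ x ∈ U, IsUnit (g x).det) {F : (Fin k → ℝ) → Fin m → ℝ} (hFper : TorusPer F)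
    (hF : Continuous F) {u : (Fin k → ℝ) → Fin m → ℝ} (huU : ∀ φ, u φ ∈ U)
    (hu : TorusC1Along ω u) (hv : TorusC1Along ω (dirDeriv ω u)) :
    (∀ t : ℝ,
        deriv (deriv (fun s : ℝ => u (s • ω))) t
          + christoffel g (u (t • ω)) (deriv (fun s : ℝ => u (s • ω)) t)
              (deriv (fun s : ℝ => u (s • ω)) t)
          = (g (u (t • ω)))⁻¹ *ᵥ F (t • ω)) ↔
      ∀ h : (Fin k → ℝ) → (Fin m → ℝ), TorusPer h → ContDiff ℝ 1 h →
        ∫ φ in torusBox k,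
          (dotp (g (u φ) *ᵥ dirDeriv ω u φ)
              (dirDeriv ω h φ + christoffel g (u φ) (dirDeriv ω u φ) (h φ))
            + dotp (F φ) (h φ)) = 0 := by
  have hGper : TorusPer (elResidual ω g F u) := torusPer_elResidual hFper hu hv
  have hGc : Continuous (elResidual ω g F u) := continuous_elResidual hU hg huU hu hv hF
  simp only [hu.deriv_orbit, hv.deriv_orbit, ← elResidual_eq_zero_iff (hdet _ (huU _))]
  calc (∀ t : ℝ, elResidual ω g F u (t • ω) = 0)
      ↔ elResidual ω g F u = 0 :=
        ⟨hGper.eq_zero_of_forall_orbit_eq_zero hω hGc, fun hG t => congrFun hG _⟩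
    _ ↔ ∀ h : (Fin k → ℝ) → Fin m → ℝ, TorusPer h → ContDiff ℝ 1 h →
          ∫ φ in torusBox k, elResidual ω g F u φ ⬝ᵥ h φ = 0 :=
        ⟨fun hG => by simp [hG], hGper.eq_zero_of_setIntegral_dotProduct_eq_zero hGc⟩
    _ ↔ ∀ h : (Fin k → ℝ) → Fin m → ℝ, TorusPer h → ContDiff ℝ 1 h →
          ∫ φ in torusBox k, weakIntegrand ω g F u h φ = 0 :=
        forall₃_congr fun h hper hh => by
          rw [setIntegral_weakIntegrand hU hg huU hu hv hsymm hdet (hper.torusC1Along hh) hF,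
            neg_eq_zero]

/-- Proposition 1 (single-chart form): for `ω` with rationally independent components,
`x(t) := u(tω)` is a classical solution of the Euler–Lagrange equations
`ẍ + Γ_x(ẋ,ẋ) = g(x)⁻¹ W'_x(tω,x)` iff the weak variational identity holds on the torus. -/
theorem stmt0 {k m : ℕ} (ω : Fin k → ℝ) (hω : LinearIndependent ℚ ω)
    (U : Set (Fin m → ℝ)) (hU : IsOpen U)
    (g : (Fin m → ℝ) → Matrix (Fin m) (Fin m) ℝ)
    (hg : ∀ i j, ContDiffOn ℝ (⊤ : ℕ∞) (fun y => g y i j) U)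
    (hgpos : ∀ x ∈ U, (g x).PosDef)
    (W : (Fin k → ℝ) → (Fin m → ℝ) → ℝ)
    (hWper : ∀ x, TorusPer (fun φ => W φ x))
    (hW : ContDiffOn ℝ (⊤ : ℕ∞) (fun p : (Fin k → ℝ) × (Fin m → ℝ) => W p.1 p.2)
      (Set.univ ×ˢ U))
    (u : (Fin k → ℝ) → (Fin m → ℝ)) (huper : TorusPer u)
    (huU : ∀ φ, u φ ∈ U) (hu : Continuous u)
    (hu1 : ∀ φ, DifferentiableAt ℝ (fun t : ℝ => u (φ + t • ω)) 0)
    (hu1c : Continuous (dirDeriv ω u))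
    (hu2 : ∀ φ, DifferentiableAt ℝ (fun t : ℝ => dirDeriv ω u (φ + t • ω)) 0)
    (hu2c : Continuous (dirDeriv ω (dirDeriv ω u))) :
    (∀ t : ℝ,
        deriv (deriv (fun s : ℝ => u (s • ω))) t
          + christoffel g (u (t • ω)) (deriv (fun s : ℝ => u (s • ω)) t)
              (deriv (fun s : ℝ => u (s • ω)) t)
          = Matrix.mulVec (g (u (t • ω)))⁻¹ (gradW W (t • ω) (u (t • ω)))) ↔
      (∀ h : (Fin k → ℝ) → (Fin m → ℝ), TorusPer h → ContDiff ℝ 1 h →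
        ∫ φ in torusBox k,
          (dotp (Matrix.mulVec (g (u φ)) (dirDeriv ω u φ))
              (dirDeriv ω h φ + christoffel g (u φ) (dirDeriv ω u φ) (h φ))
            + dotp (gradW W φ (u φ)) (h φ)) = 0) :=
  have hu' : TorusC1Along ω u := ⟨huper, hu, hu1, hu1c⟩
  stmt0_general hω hU (fun i j => (hg i j).of_le (mod_cast le_top))
    (fun x hx => (hgpos x hx).isHermitian) (fun x hx => (hgpos x hx).isUnit.map Matrix.detMonoidHom)
    (torusPer_gradW_comp hWper huper)
    (continuous_gradW_comp hU (hW.of_le (mod_cast le_top)) hu huU) huU hu'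
    ⟨hu'.torusPer_dirDeriv, hu1c, hu2, hu2c⟩
end

section
/- Let ω ∈ ℝ^k, let 𝒦 ⊂ U be compact, let κ > 0, and let χ: [0,1] × U × U → U be a smooth map such that: (i) χ(0,x,y) = x and χ(1,x,y) = y for all x,y ∈ U; (ii) ∂_s χ(0,x,y) ≠ 0 whenever x ≠ y; (iii) for every pair of smooth curves x₁, x₂: ℝ → U, every φ ∈ 𝕋^k and all (s,t) ∈ [0,1] × ℝ, writing ξ(s,t) := ∂_s χ(s,x₁(t),x₂(t)), η(s,t) := ∂_t χ(s,x₁(t),x₂(t)), ∇_ξ η := ∂_s η + Γ_{χ(s,x₁(t),x₂(t))}(ξ,η), and ‖a‖_g² := (g(χ(s,x₁(t),x₂(t))) a, a), one has ∂²/∂s² [ ½ ( g(χ(s,x₁(t),x₂(t))) η(s,t), η(s,t) ) + W(φ+tω, χ(s,x₁(t),x₂(t))) ] ≥ κ [ ‖∇_ξ η‖_g² + ‖ξ‖_g² ( ‖η‖_g² + 1 ) ]. Then for every φ ∈ 𝕋^k there is at most one twice continuously differentiable function x: ℝ → 𝒦 with sup_{t∈ℝ} ‖ẋ(t)‖ <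 ∞ solving the Euler–Lagrange equations ẍ + Γ_x(ẋ,ẋ) = g(x)⁻¹ W'_x(φ+tω, x) for all t ∈ ℝ. (Single-chart form of the paper's uniqueness proposition for bounded solutions.) -/
open MeasureTheory Real Set

/-- Euclidean norm on `ℝ^n`. -/
noncomputable def eNorm {n : ℕ} (a : Fin n → ℝ) : ℝ := Real.sqrt (∑ i, a i ^ 2)

/-- `ξ(s,t) := ∂_s χ(s, x₁(t), x₂(t))`. -/
noncomputable def xiF {m : ℕ} (χ : ℝ → (Fin m → ℝ) → (Fin m → ℝ) → (Fin m → ℝ))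
    (x₁ x₂ : ℝ → (Fin m → ℝ)) (s t : ℝ) : Fin m → ℝ :=
  deriv (fun s' : ℝ => χ s' (x₁ t) (x₂ t)) s

/-- `η(s,t) := ∂_t χ(s, x₁(t), x₂(t))`. -/
noncomputable def etaF {m : ℕ} (χ : ℝ → (Fin m → ℝ) → (Fin m → ℝ) → (Fin m → ℝ))
    (x₁ x₂ : ℝ → (Fin m → ℝ)) (s t : ℝ) : Fin m → ℝ :=
  deriv (fun t' : ℝ => χ s (x₁ t') (x₂ t')) t

/-!
Put `z = (x₁, x₂)` and `X s = χ s`, so that `s ↦ X s ∘ z` joins `x₁` to `x₂`. Let `a(t)` be the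
pairing `G(ẏ, ∂X/∂s)` of momentum and variation field at `s = 1` minus its value at `s = 0`. By the
Euler–Lagrange equations and the equality of mixed derivatives, `a'(t)` is the difference of the
`s`-derivatives of the Lagrangian at `s = 1` and `s = 0`, so convexity bounds it below by a multiple
of `‖X s (z t) - X 0 (z t)‖²` for every `s`. Since `(z, ż)` stays in a compact set, `a` is bounded,
and `|a(t)| ≥ ε` forces `X s (z t)` away from `X 0 (z t)` for some `s`, hence `a'(t) ≥ δ(ε) > 0`.
A bounded function with such a gap vanishes identically; then `a' = 0` and `X 1 ∘ z = X 0 ∘ z`.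
-/

section RealAnalysis

variable {E : Type*} [NormedAddCommGroup E] [NormedSpace ℝ E]

lemma mul_sq_norm_sub_le_of_mul_sq_norm_deriv_le {γ γ' : ℝ → E} {h : ℝ → ℝ} {c : ℝ}
    (hc : 0 ≤ c) (hγ : ∀ s ∈ Icc (0 : ℝ) 1, HasDerivWithinAt γ (γ' s) (Icc 0 1) s)
    (hh : ContinuousOn h (Icc 0 1)) (hh' : DifferentiableOn ℝ h (Ioo 0 1))
    (hle : ∀ s ∈ Ioo (0 : ℝ) 1, c * ‖γ' s‖ ^ 2 ≤ deriv h s) {s : ℝ} (hs : s ∈ Icc (0 : ℝ) 1) :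
    c * ‖γ s - γ 0‖ ^ 2 ≤ h 1 - h 0 := by
  obtain ⟨ℓ, hℓ, hℓs⟩ := exists_dual_vector'' ℝ (γ s - γ 0)
  rw [map_sub, RCLike.ofReal_real_eq_id, id_eq] at hℓs
  have hℓγ : ∀ r ∈ Icc (0 : ℝ) 1, HasDerivWithinAt (fun r => ℓ (γ r)) (ℓ (γ' r)) (Icc 0 1) r :=
    fun r hr => ℓ.hasFDerivAt.comp_hasDerivWithinAt r (hγ r hr)
  -- `c ‖γ'‖² ≥ c (2 k ℓ(γ') - k²)` for every constant `k`, and the right-hand side integrates.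
  have hmono (k : ℝ) : MonotoneOn (fun r => h r - c * (2 * k * ℓ (γ r) - k ^ 2 * r)) (Icc 0 1) := by
    have hd : ∀ r ∈ Ioo (0 : ℝ) 1, HasDerivAt (fun r => h r - c * (2 * k * ℓ (γ r) - k ^ 2 * r))
        (deriv h r - c * (2 * k * ℓ (γ' r) - k ^ 2 * 1)) r := fun r hr =>
      (hh'.differentiableAt (Ioo_mem_nhds hr.1 hr.2)).hasDerivAt.sub
        (((((hℓγ r (Ioo_subset_Icc_self hr)).hasDerivAt (Icc_mem_nhds hr.1 hr.2)).const_mul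
          (2 * k)).sub ((hasDerivAt_id r).const_mul (k ^ 2))).const_mul c)
    refine monotoneOn_of_deriv_nonneg (convex_Icc 0 1) ?_ ?_ ?_
    · have : ContinuousOn (fun r => ℓ (γ r)) (Icc 0 1) := fun r hr =>
        (hℓγ r hr).continuousWithinAt
      exact hh.sub (continuousOn_const.mul ((continuousOn_const.mul this).sub (by fun_prop)))
    · rw [interior_Icc]
      exact fun r hr => (hd r hr).differentiableAt.differentiableWithinAt
    · rw [interior_Icc]
      intro r hr
      have hℓr : ℓ (γ' r) ^ 2 ≤ ‖γ' r‖ ^ 2 :=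
        sq_le_sq.2 (by simpa using ℓ.le_of_opNorm_le hℓ (γ' r))
      have hsq : 2 * k * ℓ (γ' r) - k ^ 2 * 1 ≤ ‖γ' r‖ ^ 2 := by
        linarith [sq_nonneg (ℓ (γ' r) - k)]
      rw [(hd r hr).deriv]
      linarith [hle r hr, mul_le_mul_of_nonneg_left hsq hc]
  have h0s := hmono ‖γ s - γ 0‖ (left_mem_Icc.2 zero_le_one) hs hs.1
  have hs1 := hmono 0 hs (right_mem_Icc.2 zero_le_one) hs.2
  have hslack : 0 ≤ c * ‖γ s - γ 0‖ ^ 2 * (1 - s) :=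
    mul_nonneg (by positivity) (sub_nonneg.2 hs.2)
  simp only [mul_zero, zero_mul, ne_eq, OfNat.ofNat_ne_zero, not_false_eq_true, zero_pow,
    sub_zero] at h0s hs1
  linear_combination h0s + hs1 + hslack - 2 * c * ‖γ s - γ 0‖ * hℓs

lemma nonpos_of_bounded_of_deriv_gap {a a' : ℝ → ℝ} (ha : ∀ t, HasDerivAt a (a' t) t)
    (ha' : ∀ t, 0 ≤ a' t) {M : ℝ} (hM : ∀ t, |a t| ≤ M)
    (hgap : ∀ ε > 0, ∃ δ > 0, ∀ t, ε ≤ |a t| → δ ≤ a' t) (t₀ : ℝ) : a t₀ ≤ 0 := by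
  by_contra! hpos
  obtain ⟨δ, hδ, hle⟩ := hgap (a t₀) hpos
  have hmono : Monotone a := monotone_of_hasDerivAt_nonneg ha ha'
  have hdiff : Differentiable ℝ a := fun t => (ha t).differentiableAt
  have hderiv : ∀ t ∈ interior (Ici t₀), δ ≤ deriv a t := fun t ht => by
    rw [(ha t).deriv]
    exact hle t ((hmono (interior_subset ht)).trans (le_abs_self _))
  have hT : 0 ≤ M / δ := div_nonneg ((abs_nonneg _).trans (hM t₀)) hδ.le
  have hgrowth := (convex_Ici t₀).mul_sub_le_image_sub_of_le_deriv
    hdiff.continuous.continuousOn hdiff.differentiableOn hderiv t₀ self_mem_Ici (t₀ + M / δ)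
    (le_add_of_nonneg_right hT) (le_add_of_nonneg_right hT)
  rw [add_sub_cancel_left, mul_div_cancel₀ _ hδ.ne'] at hgrowth
  linarith [(abs_le.1 (hM (t₀ + M / δ))).2]

lemma eq_zero_of_bounded_of_deriv_gap {a a' : ℝ → ℝ} (ha : ∀ t, HasDerivAt a (a' t) t)
    (ha' : ∀ t, 0 ≤ a' t) {M : ℝ} (hM : ∀ t, |a t| ≤ M)
    (hgap : ∀ ε > 0, ∃ δ > 0, ∀ t, ε ≤ |a t| → δ ≤ a' t) (t : ℝ) : a t = 0 := by
  refine le_antisymm (nonpos_of_bounded_of_deriv_gap ha ha' hM hgap t) ?_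
  -- The time reversal `t ↦ -a (-t)` satisfies the same hypotheses.
  have hrev : ∀ t, HasDerivAt (fun t => -a (-t)) (a' (-t)) t := fun t =>
    (((ha (-t)).comp t (hasDerivAt_neg t)).neg).congr_deriv (by ring)
  have hgap_rev : ∀ ε > 0, ∃ δ > 0, ∀ t, ε ≤ |-a (-t)| → δ ≤ a' (-t) := fun ε hε => by
    obtain ⟨δ, hδ, hle⟩ := hgap ε hε
    exact ⟨δ, hδ, fun t ht => hle (-t) (by rwa [abs_neg] at ht)⟩
  simpa using nonpos_of_bounded_of_deriv_gap hrev (fun t => ha' (-t))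
    (fun t => by simpa using hM (-t)) hgap_rev (-t)

lemma exists_pos_forall_exists_le_of_isCompact {α ι : Type*} [TopologicalSpace α]
    [FirstCountableTopology α] {C : Set α} (hC : IsCompact C) {S : Set ι} {u : ι → α → ℝ}
    (hu : ∀ i ∈ S, ContinuousOn (u i) C) (hpos : ∀ x ∈ C, ∃ i ∈ S, 0 < u i x) :
    ∃ δ > 0, ∀ x ∈ C, ∃ i ∈ S, δ ≤ u i x := by
  by_contra! hcon
  choose x hxC hx using fun n : ℕ => hcon (1 / (n + 1)) Nat.one_div_pos_of_nat
  obtain ⟨x₀, hx₀, φ, hφ, hlim⟩ := hC.tendsto_subseq hxC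
  obtain ⟨i, hi, hix₀⟩ := hpos x₀ hx₀
  have hu_lim := (hu i hi x₀ hx₀).tendsto.comp (tendsto_nhdsWithin_iff.2
    ⟨hlim, Filter.Eventually.of_forall fun n => hxC (φ n)⟩)
  exact hix₀.not_ge <| le_of_tendsto_of_tendsto' hu_lim
    ((tendsto_one_div_add_atTop_nhds_zero_nat (𝕜 := ℝ)).comp hφ.tendsto_atTop)
    fun n => (hx (φ n) i hi).le

lemma exists_contDiff_curve_of_isOpen {U : Set E} (hU : IsOpen U) {p : E} (hp : p ∈ U) (v : E)
    (t₀ : ℝ) :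
    ∃ y : ℝ → E, ContDiff ℝ (⊤ : ℕ∞) y ∧ (∀ t, y t ∈ U) ∧ y t₀ = p ∧ HasDerivAt y v t₀ := by
  obtain ⟨r, hr, hball⟩ := Metric.isOpen_iff.1 hU p hp
  set ε : ℝ := r / (‖v‖ + 1)
  have hε : 0 < ε := by positivity
  -- A line segment would leave `U`, so the curve oscillates with amplitude `ε ‖v‖ < r`.
  refine ⟨fun t => p + (ε * Real.sin ((t - t₀) / ε)) • v, by fun_prop, fun t => hball ?_,
    by simp, ?_⟩
  · rw [Metric.mem_ball, dist_eq_norm, add_sub_cancel_left, norm_smul, norm_mul,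
      Real.norm_of_nonneg hε.le, Real.norm_eq_abs]
    calc ε * |Real.sin ((t - t₀) / ε)| * ‖v‖ ≤ ε * 1 * ‖v‖ := by
          gcongr
          exact Real.abs_sin_le_one _
      _ < ε * (‖v‖ + 1) := by linarith
      _ = r := by simp only [ε]; field_simp
  · have harg : HasDerivAt (fun t => (t - t₀) / ε) (1 / ε) t₀ :=
      ((hasDerivAt_id t₀).sub_const t₀).div_const ε
    exact (((harg.sin.const_mul ε).smul_const v).const_add p).congr_deriv (by simp [hε.ne'])

end RealAnalysis

section Lagrangian

variable {E : Type*} [NormedAddCommGroup E] [NormedSpace ℝ E]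
  {G : E → E →L[ℝ] E →L[ℝ] ℝ} {V : E → ℝ}

/-- The Lagrangian density `½ G_x(v, v) + V(x)` of a metric tensor `G`, encoded as a field of
continuous bilinear forms, and a force function `V`. -/
noncomputable def lagrangian (G : E → E →L[ℝ] E →L[ℝ] ℝ) (V : E → ℝ) (x v : E) : ℝ :=
  1 / 2 * G x v v + V x

/-- The Euler–Lagrange equation `d/dt ∂_v L = ∂_x L` of `L = lagrangian G V`, along the curve `y`
at the time `t`. For a symmetric `G` the momentum `∂_v L` is the covector `G_y(ẏ, ·)`; as it does
not involve `V`, a time-dependent force function only enters through its value at the time `t`. -/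
def IsEulerLagrangeAt (G : E → E →L[ℝ] E →L[ℝ] ℝ) (V : E → ℝ) (y : ℝ → E) (t : ℝ) : Prop :=
  HasDerivAt (fun τ => G (y τ) (deriv y τ))
    (fderiv ℝ (fun x => lagrangian G V x (deriv y t)) (y t)) t

lemma fderiv_apply_apply {x : E} (hG : DifferentiableAt ℝ G x) (u a b : E) :
    fderiv ℝ G x u a b = fderiv ℝ (fun y => G y a b) x u := by
  rw [((hG.hasFDerivAt.clm_apply (hasFDerivAt_const a x)).clm_apply
    (hasFDerivAt_const b x)).fderiv]
  simp

lemma hasFDerivAt_lagrangian {x : E} (hG : DifferentiableAt ℝ G x) (hV : DifferentiableAt ℝ V x)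
    (v : E) :
    HasFDerivAt (fun x => lagrangian G V x v)
      ((1 / 2 : ℝ) • ((fderiv ℝ G x).flip v).flip v + fderiv ℝ V x) x := by
  have h := ((hG.hasFDerivAt.clm_apply (hasFDerivAt_const v x)).clm_apply
    (hasFDerivAt_const v x)).const_mul (1 / 2 : ℝ)
  refine (h.add hV.hasFDerivAt).congr_fderiv ?_
  ext w
  simp

lemma hasDerivWithinAt_lagrangian {y v : ℝ → E} {y' v' : E} {S : Set ℝ} {r : ℝ}
    (hG : DifferentiableAt ℝ G (y r)) (hV : DifferentiableAt ℝ V (y r))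
    (hsymm : ∀ a b, G (y r) a b = G (y r) b a)
    (hy : HasDerivWithinAt y y' S r) (hv : HasDerivWithinAt v v' S r) :
    HasDerivWithinAt (fun r => lagrangian G V (y r) (v r))
      (fderiv ℝ (fun x => lagrangian G V x (v r)) (y r) y' + G (y r) (v r) v') S r := by
  have hGy : HasDerivWithinAt (fun r => G (y r)) (fderiv ℝ G (y r) y') S r :=
    HasFDerivAt.comp_hasDerivWithinAt (l := G) r hG.hasFDerivAt hy
  have h := (((hGy.clm_apply hv).clm_apply hv).const_mul (1 / 2 : ℝ)).add
    (hV.hasFDerivAt.comp_hasDerivWithinAt r hy)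
  refine h.congr_deriv ?_
  rw [(hasFDerivAt_lagrangian hG hV (v r)).fderiv]
  simp only [add_apply, smul_apply, ContinuousLinearMap.flip_apply, smul_eq_mul, hsymm v' (v r)]
  ring

lemma contDiffOn_lagrangian {n : WithTop ℕ∞} {U : Set E} {Z : Type*} [NormedAddCommGroup Z]
    [NormedSpace ℝ Z] {y v : Z → E} {S : Set Z} (hG : ContDiffOn ℝ n G U)
    (hV : ContDiffOn ℝ n V U) (hy : ContDiffOn ℝ n y S) (hv : ContDiffOn ℝ n v S)
    (hyU : MapsTo y S U) : ContDiffOn ℝ n (fun z => lagrangian G V (y z) (v z)) S :=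
  (contDiffOn_const.mul (((hG.comp hy hyU).clm_apply hv).clm_apply hv)).add (hV.comp hy hyU)

lemma exists_pos_mul_sq_norm_le [ProperSpace E] {α : Type*} [TopologicalSpace α] {C : Set α}
    (hC : IsCompact C) {A : α → E →L[ℝ] E →L[ℝ] ℝ} (hA : ContinuousOn A C)
    (hpos : ∀ x ∈ C, ∀ v ≠ 0, 0 < A x v v) : ∃ c > 0, ∀ x ∈ C, ∀ v, c * ‖v‖ ^ 2 ≤ A x v v := by
  have hcont : ContinuousOn (fun p : α × E => A p.1 p.2 p.2) (C ×ˢ Metric.sphere 0 1) :=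
    ((hA.comp continuousOn_fst fun p hp => hp.1).clm_apply continuousOn_snd).clm_apply
      continuousOn_snd
  obtain ⟨c, hc, hle⟩ := (hC.prod (isCompact_sphere (0 : E) 1)).exists_forall_le' hcont
    (a := 0) fun p hp => hpos p.1 hp.1 p.2 (ne_zero_of_mem_unit_sphere ⟨p.2, hp.2⟩)
  refine ⟨c, hc, fun x hx v => ?_⟩
  rcases eq_or_ne v 0 with rfl | hv
  · simp
  have hunit := hle (x, ‖v‖⁻¹ • v) ⟨hx, by simp [norm_smul, hv]⟩
  simp only [map_smul, smul_apply, smul_eq_mul] at hunit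
  calc c * ‖v‖ ^ 2 ≤ ‖v‖⁻¹ * (‖v‖⁻¹ * A x v v) * ‖v‖ ^ 2 := by gcongr
    _ = A x v v := by field_simp

lemma isEulerLagrangeAt_of_hasDerivAt_deriv {y : ℝ → E} {y'' : E} {t : ℝ}
    (hG : DifferentiableAt ℝ G (y t)) (hV : DifferentiableAt ℝ V (y t))
    (hy : DifferentiableAt ℝ y t) (hy' : HasDerivAt (deriv y) y'' t)
    (h : ∀ w, fderiv ℝ G (y t) (deriv y t) (deriv y t) w + G (y t) y'' w =
      1 / 2 * fderiv ℝ G (y t) w (deriv y t) (deriv y t) + fderiv ℝ V (y t) w) :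
    IsEulerLagrangeAt G V y t := by
  have hGy : HasDerivAt (fun τ => G (y τ)) (fderiv ℝ G (y t) (deriv y t)) t :=
    HasFDerivAt.comp_hasDerivAt (l := G) t hG.hasFDerivAt hy.hasDerivAt
  refine (hGy.clm_apply hy').congr_deriv ?_
  rw [(hasFDerivAt_lagrangian hG hV (deriv y t)).fderiv]
  ext w
  simpa using h w

end Lagrangian

section Variation

open Function

variable {E Z : Type*} [NormedAddCommGroup E] [NormedSpace ℝ E] [NormedAddCommGroup Z]
  [NormedSpace ℝ Z] {G : E → E →L[ℝ] E →L[ℝ] ℝ} {V : E → ℝ} {U : Set E} {X : ℝ → Z → E} {O : Set Z}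

/-- The vector field `∂X/∂s` along a family of maps `X s`, `0 ≤ s ≤ 1`. The derivative is taken
within `[0, 1]`, so that it is one-sided at the endpoints. -/
noncomputable def variationField (X : ℝ → Z → E) (s : ℝ) (z : Z) : E :=
  derivWithin (fun r => X r z) (Icc 0 1) s

/-- The Lagrangian density at the time `t` along the curve `X s ∘ z`, as a function of `s`,
for a curve in the parameter space with position `z` and velocity `ż` at the time `t`. -/
noncomputable def pathLagrangian (G : E → E →L[ℝ] E →L[ℝ] ℝ) (V : E → ℝ) (X : ℝ → Z → E)
    (z ż : Z) (s : ℝ) : ℝ :=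
  lagrangian G V (X s z) (fderiv ℝ (X s) z ż)

/-- The pairing `G(ẏ, ∂X/∂s)` of the momentum of the curve `y = X s ∘ z` with the variation field,
as a function of the position and the velocity of `z`. -/
noncomputable def momentumPairing (G : E → E →L[ℝ] E →L[ℝ] ℝ) (X : ℝ → Z → E) (s : ℝ)
    (j : Z × Z) : ℝ :=
  G (X s j.1) (fderiv ℝ (X s) j.1 j.2) (variationField X s j.1)

lemma hasDerivWithinAt_variationField (hX : DifferentiableOn ℝ (uncurry X) (Icc 0 1 ×ˢ O))
    {s : ℝ} (hs : s ∈ Icc (0 : ℝ) 1) {z : Z} (hz : z ∈ O) :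
    HasDerivWithinAt (fun r => X r z) (variationField X s z) (Icc 0 1) s := by
  have hmaps : MapsTo (fun r : ℝ => (r, z)) (Icc 0 1) (Icc 0 1 ×ˢ O) := fun r hr => ⟨hr, hz⟩
  exact ((hX (s, z) ⟨hs, hz⟩).comp s (by fun_prop) hmaps).hasDerivWithinAt

lemma fderivWithin_uncurry_apply_fst (hX : DifferentiableOn ℝ (uncurry X) (Icc 0 1 ×ˢ O))
    {s : ℝ} (hs : s ∈ Icc (0 : ℝ) 1) {z : Z} (hz : z ∈ O) :
    fderivWithin ℝ (uncurry X) (Icc 0 1 ×ˢ O) (s, z) (1, 0) = variationField X s z := by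
  have hmaps : MapsTo (fun r : ℝ => (r, z)) (Icc 0 1) (Icc 0 1 ×ˢ O) := fun r hr => ⟨hr, hz⟩
  have h := HasFDerivWithinAt.comp_hasDerivWithinAt (f := fun r => (r, z)) s
    (hX (s, z) ⟨hs, hz⟩).hasFDerivWithinAt
    ((hasDerivWithinAt_id s _).prodMk (hasDerivWithinAt_const s _ z)) hmaps
  exact (h.derivWithin (uniqueDiffOn_Icc zero_lt_one s hs)).symm

lemma hasFDerivAt_of_differentiableOn_uncurry (hO : IsOpen O)
    (hX : DifferentiableOn ℝ (uncurry X) (Icc 0 1 ×ˢ O))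
    {s : ℝ} (hs : s ∈ Icc (0 : ℝ) 1) {z : Z} (hz : z ∈ O) :
    HasFDerivAt (X s) ((fderivWithin ℝ (uncurry X) (Icc 0 1 ×ˢ O) (s, z)).comp
      (ContinuousLinearMap.inr ℝ ℝ Z)) z := by
  have hmaps : MapsTo (fun w : Z => (s, w)) O (Icc 0 1 ×ˢ O) := fun w hw => ⟨hs, hw⟩
  exact (HasFDerivWithinAt.comp z (f := fun w : Z => (s, w))
    (hX (s, z) ⟨hs, hz⟩).hasFDerivWithinAt (hasFDerivAt_prodMk_right s z).hasFDerivWithinAt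
    hmaps).hasFDerivAt (hO.mem_nhds hz)

lemma contDiffOn_variationField {n : WithTop ℕ∞} (hO : IsOpen O)
    (hX : ContDiffOn ℝ (n + 1) (uncurry X) (Icc 0 1 ×ˢ O)) :
    ContDiffOn ℝ n (uncurry (variationField X)) (Icc 0 1 ×ˢ O) :=
  ((hX.fderivWithin ((uniqueDiffOn_Icc zero_lt_one).prod hO.uniqueDiffOn) le_rfl).clm_apply
    (contDiffOn_const (c := ((1, 0) : ℝ × Z)))).congr fun p hp =>
      (fderivWithin_uncurry_apply_fst (hX.differentiableOn (by simp)) hp.1 hp.2).symm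

lemma contDiffOn_fderiv {n : WithTop ℕ∞} (hO : IsOpen O)
    (hX : ContDiffOn ℝ (n + 1) (uncurry X) (Icc 0 1 ×ˢ O)) :
    ContDiffOn ℝ n (fun p : ℝ × Z => fderiv ℝ (X p.1) p.2) (Icc 0 1 ×ˢ O) :=
  ((hX.fderivWithin ((uniqueDiffOn_Icc zero_lt_one).prod hO.uniqueDiffOn) le_rfl).clm_comp
    (contDiffOn_const (c := ContinuousLinearMap.inr ℝ ℝ Z))).congr fun p hp =>
      (hasFDerivAt_of_differentiableOn_uncurry hO (hX.differentiableOn (by simp)) hp.1 hp.2).fderiv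

lemma exists_hasDerivAt_mixed (hO : IsOpen O) (hX : ContDiffOn ℝ 2 (uncurry X) (Icc 0 1 ×ˢ O))
    {s : ℝ} (hs : s ∈ Icc (0 : ℝ) 1) {z : ℝ → Z} {ż : Z} {t : ℝ} (hzt : z t ∈ O)
    (hz : HasDerivAt z ż t) :
    ∃ d, HasDerivWithinAt (fun r => fderiv ℝ (X r) (z t) ż) d (Icc 0 1) s ∧
      HasDerivAt (fun τ => variationField X s (z τ)) d t := by
  have hX₁ : DifferentiableOn ℝ (uncurry X) (Icc 0 1 ×ˢ O) := hX.differentiableOn two_ne_zero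
  have hD : UniqueDiffOn ℝ (Icc (0 : ℝ) 1 ×ˢ O) :=
    (uniqueDiffOn_Icc zero_lt_one).prod hO.uniqueDiffOn
  have hmem : (s, z t) ∈ Icc (0 : ℝ) 1 ×ˢ O := ⟨hs, hzt⟩
  have hcl : (s, z t) ∈ closure (interior (Icc (0 : ℝ) 1 ×ˢ O)) := by
    rw [interior_prod_eq, closure_prod_eq, interior_Icc, closure_Ioo zero_ne_one, hO.interior_eq]
    exact ⟨hs, subset_closure hzt⟩
  have hsymm := (hX _ hmem).isSymmSndFDerivWithinAt
    (minSmoothness_of_isRCLikeNormedField (𝕜 := ℝ) (n := 2)).le hD hcl hmem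
  have hF := ((hX.fderivWithin hD (m := 1) one_add_one_eq_two.le).differentiableOn one_ne_zero
    _ hmem).hasFDerivWithinAt
  refine ⟨_, ((HasFDerivWithinAt.comp_hasDerivWithinAt (f := fun r => (r, z t)) s hF
    ((hasDerivWithinAt_id s _).prodMk (hasDerivWithinAt_const s _ (z t)))
    fun r hr => ⟨hr, hzt⟩).clm_apply (hasDerivWithinAt_const s _ ((0, ż) : ℝ × Z))).congr_of_mem
    (fun r hr => ?_) hs, ?_⟩
  · rw [(hasFDerivAt_of_differentiableOn_uncurry hO hX₁ hr hzt).fderiv]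
    simp
  · have hev : ∀ᶠ τ in nhds t, (s, z τ) ∈ Icc (0 : ℝ) 1 ×ˢ O :=
      (hz.continuousAt.eventually_mem (hO.mem_nhds hzt)).mono fun τ hτ => ⟨hs, hτ⟩
    refine (((HasFDerivWithinAt.comp_hasDerivAt (f := fun τ => (s, z τ)) t hF
      ((hasDerivAt_const t s).prodMk hz) hev).clm_apply
      (hasDerivAt_const t ((1, 0) : ℝ × Z))).congr_of_eventuallyEq
      (hev.mono fun τ hτ => ?_)).congr_deriv ?_
    · exact (fderivWithin_uncurry_apply_fst hX₁ hτ.1 hτ.2).symm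
    · simpa using hsymm (0, ż) (1, 0)

lemma contDiffOn_pathLagrangian {n : WithTop ℕ∞} (hO : IsOpen O)
    (hX : ContDiffOn ℝ (n + 1) (uncurry X) (Icc 0 1 ×ˢ O))
    (hXU : ∀ s ∈ Icc (0 : ℝ) 1, ∀ z ∈ O, X s z ∈ U) (hG : ContDiffOn ℝ n G U)
    (hV : ContDiffOn ℝ n V U) {z : Z} (hz : z ∈ O) (ż : Z) :
    ContDiffOn ℝ n (pathLagrangian G V X z ż) (Icc 0 1) := by
  have hline : ContDiffOn ℝ n (fun r : ℝ => (r, z)) (Icc 0 1) := by fun_prop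
  have hmaps : MapsTo (fun r : ℝ => (r, z)) (Icc 0 1) (Icc 0 1 ×ˢ O) := fun r hr => ⟨hr, hz⟩
  exact contDiffOn_lagrangian hG hV ((hX.of_le le_self_add).comp hline hmaps)
    (((contDiffOn_fderiv hO hX).comp hline hmaps).clm_apply contDiffOn_const)
    fun r hr => hXU r hr z hz

lemma hasDerivAt_momentumPairing (hU : IsOpen U) (hO : IsOpen O)
    (hX : ContDiffOn ℝ 2 (uncurry X) (Icc 0 1 ×ˢ O))
    (hXU : ∀ s ∈ Icc (0 : ℝ) 1, ∀ z ∈ O, X s z ∈ U) (hG : DifferentiableOn ℝ G U)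
    (hV : DifferentiableOn ℝ V U) (hsymm : ∀ x ∈ U, ∀ a b, G x a b = G x b a)
    {s : ℝ} (hs : s ∈ Icc (0 : ℝ) 1) {z : ℝ → Z} (hz : Differentiable ℝ z) (hzO : ∀ t, z t ∈ O)
    {t : ℝ} (hEL : IsEulerLagrangeAt G V (fun τ => X s (z τ)) t) :
    HasDerivAt (fun τ => momentumPairing G X s (z τ, deriv z τ))
      (derivWithin (pathLagrangian G V X (z t) (deriv z t)) (Icc 0 1) s) t := by
  have hX₁ : DifferentiableOn ℝ (uncurry X) (Icc 0 1 ×ˢ O) := hX.differentiableOn two_ne_zero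
  have hxU : X s (z t) ∈ U := hXU s hs _ (hzO t)
  have hGx := hG.differentiableAt (hU.mem_nhds hxU)
  have hVx := hV.differentiableAt (hU.mem_nhds hxU)
  have hvel (τ : ℝ) : deriv (fun τ => X s (z τ)) τ = fderiv ℝ (X s) (z τ) (deriv z τ) :=
    ((hasFDerivAt_of_differentiableOn_uncurry hO hX₁ hs (hzO τ)).differentiableAt.hasFDerivAt
      |>.comp_hasDerivAt τ (hz τ).hasDerivAt).deriv
  obtain ⟨d, hds, hdt⟩ := exists_hasDerivAt_mixed hO hX hs (hzO t) (hz t).hasDerivAt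
  have hpath := hasDerivWithinAt_lagrangian hGx hVx (hsymm _ hxU)
    (hasDerivWithinAt_variationField hX₁ hs (hzO t)) hds
  simp only [IsEulerLagrangeAt, hvel] at hEL
  exact (hEL.clm_apply hdt).congr_deriv
    (hpath.derivWithin (uniqueDiffOn_Icc zero_lt_one s hs)).symm

lemma continuousOn_momentumPairing (hO : IsOpen O)
    (hX : ContDiffOn ℝ 1 (uncurry X) (Icc 0 1 ×ˢ O))
    (hXU : ∀ s ∈ Icc (0 : ℝ) 1, ∀ z ∈ O, X s z ∈ U) (hG : ContinuousOn G U)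
    {s : ℝ} (hs : s ∈ Icc (0 : ℝ) 1) :
    ContinuousOn (momentumPairing G X s) (O ×ˢ univ) := by
  have hmaps : MapsTo (fun j : Z × Z => (s, j.1)) (O ×ˢ univ) (Icc 0 1 ×ˢ O) :=
    fun j hj => ⟨hs, hj.1⟩
  have hfst : ContinuousOn (fun j : Z × Z => (s, j.1)) (O ×ˢ univ) := by fun_prop
  have hGX : ContinuousOn (fun j : Z × Z => G (X s j.1)) (O ×ˢ univ) :=
    hG.comp (hX.continuousOn.comp hfst hmaps) fun j hj => hXU s hs _ hj.1
  exact (hGX.clm_apply (((contDiffOn_fderiv (n := 0) hO hX).continuousOn.comp hfst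
    hmaps).clm_apply continuousOn_snd)).clm_apply
    ((contDiffOn_variationField (n := 0) hO hX).continuousOn.comp hfst hmaps)

lemma momentumPairing_eq_zero {j : Z × Z} {x : E} (hconst : ∀ s ∈ Icc (0 : ℝ) 1, X s j.1 = x)
    {s : ℝ} (hs : s ∈ Icc (0 : ℝ) 1) : momentumPairing G X s j = 0 := by
  have hξ : variationField X s j.1 = 0 := by
    rw [variationField, derivWithin_congr hconst (hconst s hs), derivWithin_fun_const,
      Pi.zero_apply]
  rw [momentumPairing, hξ, map_zero]

lemma mul_sq_norm_sub_le_derivWithin_pathLagrangian_sub (hO : IsOpen O)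
    (hX : ContDiffOn ℝ 3 (uncurry X) (Icc 0 1 ×ˢ O))
    (hXU : ∀ s ∈ Icc (0 : ℝ) 1, ∀ z ∈ O, X s z ∈ U) (hG : ContDiffOn ℝ 2 G U)
    (hV : ContDiffOn ℝ 2 V U) {κ c : ℝ} (hκ : 0 ≤ κ) (hc : 0 ≤ c) {z ż : Z} (hz : z ∈ O)
    (hcoer : ∀ s ∈ Icc (0 : ℝ) 1, ∀ v, c * ‖v‖ ^ 2 ≤ G (X s z) v v)
    (hconv : ∀ s ∈ Ioo (0 : ℝ) 1, κ * G (X s z) (variationField X s z) (variationField X s z) ≤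
      deriv (deriv (pathLagrangian G V X z ż)) s) {s : ℝ} (hs : s ∈ Icc (0 : ℝ) 1) :
    κ * c * ‖X s z - X 0 z‖ ^ 2 ≤ derivWithin (pathLagrangian G V X z ż) (Icc 0 1) 1 -
      derivWithin (pathLagrangian G V X z ż) (Icc 0 1) 0 := by
  have hL := contDiffOn_pathLagrangian hO (n := 2) hX hXU hG hV hz ż
  have hL' : ContDiffOn ℝ 1 (derivWithin (pathLagrangian G V X z ż) (Icc 0 1)) (Icc 0 1) :=
    hL.derivWithin (uniqueDiffOn_Icc zero_lt_one) one_add_one_eq_two.le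
  refine mul_sq_norm_sub_le_of_mul_sq_norm_deriv_le (mul_nonneg hκ hc)
    (fun s hs => hasDerivWithinAt_variationField (hX.differentiableOn three_ne_zero) hs hz)
    hL'.continuousOn ((hL'.differentiableOn one_ne_zero).mono Ioo_subset_Icc_self)
    (fun s hs => ?_) hs
  have hderiv : derivWithin (pathLagrangian G V X z ż) (Icc 0 1) =ᶠ[nhds s]
      deriv (pathLagrangian G V X z ż) := by
    filter_upwards [isOpen_Ioo.mem_nhds hs] with r hr
    exact derivWithin_of_mem_nhds (Icc_mem_nhds hr.1 hr.2)
  rw [hderiv.deriv_eq, mul_assoc]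
  exact (mul_le_mul_of_nonneg_left (hcoer s (Ioo_subset_Icc_self hs) _) hκ).trans (hconv s hs)

lemma exists_pos_le_norm_sub_of_le_abs_momentumPairing_sub (hO : IsOpen O)
    (hX : ContDiffOn ℝ 1 (uncurry X) (Icc 0 1 ×ˢ O))
    (hXU : ∀ s ∈ Icc (0 : ℝ) 1, ∀ z ∈ O, X s z ∈ U) (hG : ContinuousOn G U)
    {J : Set (Z × Z)} (hJ : IsCompact J) (hJO : J ⊆ O ×ˢ univ) {ε : ℝ} (hε : 0 < ε) :
    ∃ δ > 0, ∀ j ∈ J, ε ≤ |momentumPairing G X 1 j - momentumPairing G X 0 j| →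
      ∃ s ∈ Icc (0 : ℝ) 1, δ ≤ ‖X s j.1 - X 0 j.1‖ := by
  have h0 : (0 : ℝ) ∈ Icc (0 : ℝ) 1 := left_mem_Icc.2 zero_le_one
  have h1 : (1 : ℝ) ∈ Icc (0 : ℝ) 1 := right_mem_Icc.2 zero_le_one
  have hP : ContinuousOn (fun j => |momentumPairing G X 1 j - momentumPairing G X 0 j|) J :=
    (((continuousOn_momentumPairing hO hX hXU hG h1).sub
      (continuousOn_momentumPairing hO hX hXU hG h0)).mono hJO).abs
  have hcpt : IsCompact {j ∈ J | ε ≤ |momentumPairing G X 1 j - momentumPairing G X 0 j|} :=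
    hJ.of_isClosed_subset (hP.preimage_isClosed_of_isClosed hJ.isClosed isClosed_Ici)
      inter_subset_left
  have hXs : ∀ s ∈ Icc (0 : ℝ) 1, ContinuousOn (fun j : Z × Z => X s j.1) J := fun s hs =>
    hX.continuousOn.comp (f := fun j : Z × Z => (s, j.1)) (by fun_prop)
      fun j hj => ⟨hs, (hJO hj).1⟩
  obtain ⟨δ, hδ, hle⟩ := exists_pos_forall_exists_le_of_isCompact hcpt (S := Icc (0 : ℝ) 1)
    (u := fun s j => ‖X s j.1 - X 0 j.1‖)
    (fun s hs => (((hXs s hs).sub (hXs 0 h0)).norm).mono (sep_subset _ _)) fun j hj => by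
      by_contra! hcon
      have hconst : ∀ s ∈ Icc (0 : ℝ) 1, X s j.1 = X 0 j.1 := fun s hs =>
        sub_eq_zero.1 (norm_le_zero_iff.1 (hcon s hs))
      have := hj.2
      rw [momentumPairing_eq_zero hconst h1, momentumPairing_eq_zero hconst h0, sub_zero,
        abs_zero] at this
      exact this.not_gt hε
  exact ⟨δ, hδ, fun j hj hPj => hle j ⟨hj, hPj⟩⟩

lemma endpoints_eq_of_sq_norm_sub_le_deriv (hO : IsOpen O)
    (hX : ContDiffOn ℝ 1 (uncurry X) (Icc 0 1 ×ˢ O))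
    (hXU : ∀ s ∈ Icc (0 : ℝ) 1, ∀ z ∈ O, X s z ∈ U) (hG : ContinuousOn G U)
    {J : Set (Z × Z)} (hJ : IsCompact J) (hJO : J ⊆ O ×ˢ univ) {j : ℝ → Z × Z}
    (hj : ∀ t, j t ∈ J) {c : ℝ} (hc : 0 < c) {a' : ℝ → ℝ}
    (ha : ∀ t, HasDerivAt
      (fun τ => momentumPairing G X 1 (j τ) - momentumPairing G X 0 (j τ)) (a' t) t)
    (hle : ∀ t, ∀ s ∈ Icc (0 : ℝ) 1, c * ‖X s (j t).1 - X 0 (j t).1‖ ^ 2 ≤ a' t) (t : ℝ) :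
    X 0 (j t).1 = X 1 (j t).1 := by
  have h0 : (0 : ℝ) ∈ Icc (0 : ℝ) 1 := left_mem_Icc.2 zero_le_one
  have h1 : (1 : ℝ) ∈ Icc (0 : ℝ) 1 := right_mem_Icc.2 zero_le_one
  obtain ⟨M, hM⟩ := hJ.exists_bound_of_continuousOn
    (((continuousOn_momentumPairing hO hX hXU hG h1).sub
      (continuousOn_momentumPairing hO hX hXU hG h0)).mono hJO)
  have ha'_nonneg (t : ℝ) : 0 ≤ a' t := by simpa using hle t 0 h0
  have hgap : ∀ ε > 0, ∃ δ > 0, ∀ t,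
      ε ≤ |momentumPairing G X 1 (j t) - momentumPairing G X 0 (j t)| → δ ≤ a' t := by
    intro ε hε
    obtain ⟨δ, hδ, hδle⟩ :=
      exists_pos_le_norm_sub_of_le_abs_momentumPairing_sub hO hX hXU hG hJ hJO hε
    refine ⟨c * δ ^ 2, by positivity, fun t ht => ?_⟩
    obtain ⟨s, hs, hδs⟩ := hδle _ (hj t) ht
    exact le_trans (by gcongr) (hle t s hs)
  have hzero := eq_zero_of_bounded_of_deriv_gap ha ha'_nonneg (fun t => hM _ (hj t)) hgap
  have ha'_zero : a' t = 0 :=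
    (ha t).unique ((hasDerivAt_const t (0 : ℝ)).congr_of_eventuallyEq (.of_forall hzero))
  have hsq : ‖X 1 (j t).1 - X 0 (j t).1‖ ^ 2 ≤ 0 :=
    nonpos_of_mul_nonpos_right ((hle t 1 h1).trans ha'_zero.le) hc
  exact (sub_eq_zero.1 (norm_eq_zero.1 (sq_nonpos_iff _ |>.1 hsq))).symm

theorem endpoints_eq_of_isEulerLagrangeAt [ProperSpace E] [ProperSpace Z] (hU : IsOpen U)
    (hO : IsOpen O) (hG : ContDiffOn ℝ 2 G U) (hsymm : ∀ x ∈ U, ∀ a b, G x a b = G x b a)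
    (hpos : ∀ x ∈ U, ∀ v ≠ 0, 0 < G x v v) {V : ℝ → E → ℝ} (hV : ∀ t, ContDiffOn ℝ 2 (V t) U)
    (hX : ContDiffOn ℝ 3 (uncurry X) (Icc 0 1 ×ˢ O))
    (hXU : ∀ s ∈ Icc (0 : ℝ) 1, ∀ z ∈ O, X s z ∈ U) {C : Set Z} (hC : IsCompact C) (hCO : C ⊆ O)
    {z : ℝ → Z} (hz : Differentiable ℝ z) (hzC : ∀ t, z t ∈ C) {B : ℝ}
    (hB : ∀ t, ‖deriv z t‖ ≤ B) {κ : ℝ} (hκ : 0 < κ)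
    (hconv : ∀ t, ∀ s ∈ Ioo (0 : ℝ) 1,
      κ * G (X s (z t)) (variationField X s (z t)) (variationField X s (z t)) ≤
        deriv (deriv (pathLagrangian G (V t) X (z t) (deriv z t))) s)
    (h₀ : ∀ t, IsEulerLagrangeAt G (V t) (fun τ => X 0 (z τ)) t)
    (h₁ : ∀ t, IsEulerLagrangeAt G (V t) (fun τ => X 1 (z τ)) t) (t : ℝ) :
    X 0 (z t) = X 1 (z t) := by
  obtain ⟨c, hc, hcoer⟩ :=
    exists_pos_mul_sq_norm_le (isCompact_Icc.prod hC) (A := fun p => G (uncurry X p))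
      (hG.continuousOn.comp (hX.continuousOn.mono (prod_mono subset_rfl hCO))
        fun p hp => hXU _ hp.1 _ (hCO hp.2)) fun p hp => hpos _ (hXU _ hp.1 _ (hCO hp.2))
  have hmomentum {σ : ℝ} (hσ : σ ∈ Icc (0 : ℝ) 1)
      (hEL : ∀ t, IsEulerLagrangeAt G (V t) (fun τ => X σ (z τ)) t) (t : ℝ) :=
    hasDerivAt_momentumPairing hU hO (hX.of_le (by norm_num)) hXU
      (hG.differentiableOn two_ne_zero) ((hV t).differentiableOn two_ne_zero) hsymm hσ hz
      (fun t => hCO (hzC t)) (hEL t)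
  exact endpoints_eq_of_sq_norm_sub_le_deriv hO (hX.of_le (by norm_num)) hXU hG.continuousOn
    (hC.prod (isCompact_closedBall (0 : Z) B)) (prod_mono hCO (subset_univ _))
    (fun t => ⟨hzC t, mem_closedBall_zero_iff.2 (hB t)⟩) (mul_pos hκ hc)
    (fun t => (hmomentum (right_mem_Icc.2 zero_le_one) h₁ t).sub
      (hmomentum (left_mem_Icc.2 zero_le_one) h₀ t))
    (fun t s hs => mul_sq_norm_sub_le_derivWithin_pathLagrangian_sub hO hX hXU hG (hV t) hκ.le
      hc.le (hCO (hzC t)) (fun s hs => hcoer (s, z t) ⟨hs, hzC t⟩) (hconv t) hs) t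

end Variation

section Coordinates

open Function

variable {m : ℕ} {g : (Fin m → ℝ) → Matrix (Fin m) (Fin m) ℝ} {U : Set (Fin m → ℝ)}
  {x : Fin m → ℝ}

/-- The bilinear form `(a, b) ↦ (M a, b)` of a matrix, as a continuous bilinear map: the metric
tensor of the coordinate-free notion `lagrangian`. -/
noncomputable def matrixForm (M : Matrix (Fin m) (Fin m) ℝ) :
    (Fin m → ℝ) →L[ℝ] (Fin m → ℝ) →L[ℝ] ℝ :=
  ∑ i, ∑ j, M i j • (ContinuousLinearMap.proj j).smulRight
    (ContinuousLinearMap.proj i : (Fin m → ℝ) →L[ℝ] ℝ)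

lemma matrixForm_apply (M : Matrix (Fin m) (Fin m) ℝ) (a b : Fin m → ℝ) :
    matrixForm M a b = dotp (M.mulVec a) b := by
  simp [matrixForm, dotp, Matrix.mulVec, dotProduct, Finset.sum_mul, mul_assoc]

lemma matrixForm_symm {M : Matrix (Fin m) (Fin m) ℝ} (hM : M.PosDef) (a b : Fin m → ℝ) :
    matrixForm M a b = matrixForm M b a := by
  rw [matrixForm_apply, matrixForm_apply]
  simp only [dotp, Matrix.mulVec, dotProduct, Finset.sum_mul]
  rw [Finset.sum_comm]
  refine Finset.sum_congr rfl fun i _ => Finset.sum_congr rfl fun j _ => ?_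
  have hij : M j i = M i j := by simpa using hM.1.apply i j
  rw [hij]
  ring

lemma matrixForm_pos {M : Matrix (Fin m) (Fin m) ℝ} (hM : M.PosDef) {a : Fin m → ℝ} (ha : a ≠ 0) :
    0 < matrixForm M a a := by
  rw [matrixForm_apply]
  simpa [dotp, dotProduct, mul_comm] using hM.dotProduct_mulVec_pos ha

lemma matrixForm_mulVec_inv {M : Matrix (Fin m) (Fin m) ℝ} (hM : M.PosDef) (a b : Fin m → ℝ) :
    matrixForm M (M⁻¹.mulVec a) b = dotp a b := by
  rw [matrixForm_apply, Matrix.mulVec_mulVec, Matrix.mul_nonsing_inv _ hM.det_pos.ne'.isUnit,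
    Matrix.one_mulVec]

lemma dotp_pd (f : (Fin m → ℝ) → ℝ) (x u : Fin m → ℝ) : dotp (pd f x) u = fderiv ℝ f x u := by
  conv_rhs => rw [pi_eq_sum_univ' u]
  simp [dotp, pd, mul_comm]

lemma contDiffOn_matrixForm {n : WithTop ℕ∞} (hg : ∀ i j, ContDiffOn ℝ n (fun y => g y i j) U) :
    ContDiffOn ℝ n (fun y => matrixForm (g y)) U := by
  refine contDiffOn_clm_apply.2 fun a => contDiffOn_clm_apply.2 fun b => ?_
  simp only [matrixForm_apply, dotp, Matrix.mulVec, dotProduct]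
  fun_prop

lemma fderiv_matrixForm (hU : IsOpen U) (hg : ∀ i j, ContDiffOn ℝ 1 (fun y => g y i j) U)
    (hx : x ∈ U) (u a b : Fin m → ℝ) :
    fderiv ℝ (fun y => matrixForm (g y)) x u a b =
      ∑ i, ∑ j, ∑ k, pd (fun y => g y i j) x k * u k * a j * b i := by
  have hgx (i j : Fin m) : DifferentiableAt ℝ (fun y => g y i j) x :=
    ((hg i j).differentiableOn one_ne_zero).differentiableAt (hU.mem_nhds hx)
  have hsum : HasFDerivAt (fun y => ∑ i, (∑ j, g y i j * a j) * b i)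
      (∑ i, b i • ∑ j, a j • fderiv ℝ (fun y => g y i j) x) x :=
    HasFDerivAt.fun_sum fun i _ => (HasFDerivAt.fun_sum fun j _ =>
      (hgx i j).hasFDerivAt.mul_const (a j)).mul_const (b i)
  rw [fderiv_apply_apply (((contDiffOn_matrixForm hg).differentiableOn one_ne_zero).differentiableAt
    (hU.mem_nhds hx))]
  simp only [matrixForm_apply, dotp, Matrix.mulVec, dotProduct]
  rw [hsum.fderiv]
  simp only [sum_apply, smul_apply, smul_eq_mul, ← dotp_pd, dotp, Finset.mul_sum]
  exact Finset.sum_congr rfl fun i _ => Finset.sum_congr rfl fun j _ =>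
    Finset.sum_congr rfl fun k _ => by ring

lemma matrixForm_christoffel (hU : IsOpen U) (hg : ∀ i j, ContDiffOn ℝ 1 (fun y => g y i j) U)
    (hx : x ∈ U) (hgx : (g x).PosDef) (a b c : Fin m → ℝ) :
    matrixForm (g x) (christoffel g x a b) c = 1 / 2 *
      (fderiv ℝ (fun y => matrixForm (g y)) x a b c +
        fderiv ℝ (fun y => matrixForm (g y)) x b c a -
        fderiv ℝ (fun y => matrixForm (g y)) x c b a) := by
  have hΓ : christoffel g x a b = (g x)⁻¹.mulVec fun l => 1 / 2 * ∑ j, ∑ k,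
      (pd (fun y => g y l k) x j + pd (fun y => g y j l) x k - pd (fun y => g y j k) x l) *
        a j * b k := by
    ext i
    simp only [christoffel, Matrix.mulVec, dotProduct, Finset.mul_sum]
    exact Finset.sum_congr rfl fun l _ => Finset.sum_congr rfl fun j _ =>
      Finset.sum_congr rfl fun k _ => by ring
  have ha : ∑ l, ∑ k, ∑ j, pd (fun y => g y l k) x j * a j * b k * c l =
      ∑ l, ∑ j, ∑ k, pd (fun y => g y l k) x j * a j * b k * c l :=
    Finset.sum_congr rfl fun l _ => Finset.sum_comm
  have hb : ∑ j, ∑ l, ∑ k, pd (fun y => g y j l) x k * b k * c l * a j =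
      ∑ l, ∑ j, ∑ k, pd (fun y => g y j l) x k * b k * c l * a j := Finset.sum_comm
  have hc : ∑ j, ∑ k, ∑ l, pd (fun y => g y j k) x l * c l * b k * a j =
      ∑ l, ∑ j, ∑ k, pd (fun y => g y j k) x l * c l * b k * a j :=
    (Finset.sum_congr rfl fun j _ => Finset.sum_comm).trans Finset.sum_comm
  rw [hΓ, matrixForm_mulVec_inv hgx, fderiv_matrixForm hU hg hx, fderiv_matrixForm hU hg hx,
    fderiv_matrixForm hU hg hx, ha, hb, hc]
  simp only [dotp, Finset.mul_sum, Finset.sum_mul, ← Finset.sum_add_distrib,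
    ← Finset.sum_sub_distrib]
  exact Finset.sum_congr rfl fun l _ => Finset.sum_congr rfl fun j _ =>
    Finset.sum_congr rfl fun k _ => by ring

lemma fderiv_matrixForm_symm (hU : IsOpen U) (hg : ∀ i j, ContDiffOn ℝ 1 (fun y => g y i j) U)
    (hgpos : ∀ x ∈ U, (g x).PosDef) (hx : x ∈ U) (u a b : Fin m → ℝ) :
    fderiv ℝ (fun y => matrixForm (g y)) x u a b =
      fderiv ℝ (fun y => matrixForm (g y)) x u b a := by
  have hG := ((contDiffOn_matrixForm hg).differentiableOn one_ne_zero).differentiableAt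
    (hU.mem_nhds hx)
  have hsymm : (fun y => matrixForm (g y) a b) =ᶠ[nhds x] fun y => matrixForm (g y) b a :=
    Filter.eventually_of_mem (hU.mem_nhds hx) fun y hy => matrixForm_symm (hgpos y hy) a b
  rw [fderiv_apply_apply hG, fderiv_apply_apply hG, hsymm.fderiv_eq]

lemma isEulerLagrangeAt_of_christoffel (hU : IsOpen U)
    (hg : ∀ i j, ContDiffOn ℝ 1 (fun y => g y i j) U) (hgpos : ∀ x ∈ U, (g x).PosDef)
    {V : (Fin m → ℝ) → ℝ} {y : ℝ → Fin m → ℝ} {t : ℝ} (hV : DifferentiableAt ℝ V (y t))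
    (hyU : y t ∈ U) (hy : DifferentiableAt ℝ y t) (hy' : DifferentiableAt ℝ (deriv y) t)
    (hEL : deriv (deriv y) t + christoffel g (y t) (deriv y t) (deriv y t) =
      (g (y t))⁻¹.mulVec (pd V (y t))) :
    IsEulerLagrangeAt (fun x => matrixForm (g x)) V y t := by
  have hG := ((contDiffOn_matrixForm hg).differentiableOn one_ne_zero).differentiableAt
    (hU.mem_nhds hyU)
  refine isEulerLagrangeAt_of_hasDerivAt_deriv hG hV hy hy'.hasDerivAt fun w => ?_
  have hacc := congrArg (fun v => matrixForm (g (y t)) v w) hEL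
  simp only [map_add, add_apply, matrixForm_mulVec_inv (hgpos _ hyU), dotp_pd,
    matrixForm_christoffel hU hg hyU (hgpos _ hyU)] at hacc
  rw [fderiv_matrixForm_symm hU hg hgpos hyU _ w] at hacc
  linear_combination hacc

lemma norm_le_eNorm (a : Fin m → ℝ) : ‖a‖ ≤ eNorm a := by
  refine (pi_norm_le_iff_of_nonneg (Real.sqrt_nonneg _)).2 fun i => Real.abs_le_sqrt ?_
  exact Finset.single_le_sum (f := fun i => a i ^ 2) (fun j _ => sq_nonneg _) (Finset.mem_univ i)

lemma exists_curves_etaF_xiF (hU : IsOpen U) {χ : ℝ → (Fin m → ℝ) → (Fin m → ℝ) → (Fin m → ℝ)}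
    (hχ : DifferentiableOn ℝ (uncurry fun s => uncurry (χ s)) (Icc 0 1 ×ˢ U ×ˢ U))
    {z : (Fin m → ℝ) × (Fin m → ℝ)} (hz : z ∈ U ×ˢ U) (ż : (Fin m → ℝ) × (Fin m → ℝ)) (t : ℝ) :
    ∃ y₁ y₂ : ℝ → Fin m → ℝ, ContDiff ℝ (⊤ : ℕ∞) y₁ ∧ ContDiff ℝ (⊤ : ℕ∞) y₂ ∧
      (∀ τ, y₁ τ ∈ U) ∧ (∀ τ, y₂ τ ∈ U) ∧ (y₁ t, y₂ t) = z ∧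
      (∀ s ∈ Icc (0 : ℝ) 1, etaF χ y₁ y₂ s t = fderiv ℝ (uncurry (χ s)) z ż) ∧
      ∀ s ∈ Ioo (0 : ℝ) 1, xiF χ y₁ y₂ s t = variationField (fun s => uncurry (χ s)) s z := by
  obtain ⟨y₁, hy₁, hy₁U, hy₁t, hv₁⟩ := exists_contDiff_curve_of_isOpen hU hz.1 ż.1 t
  obtain ⟨y₂, hy₂, hy₂U, hy₂t, hv₂⟩ := exists_contDiff_curve_of_isOpen hU hz.2 ż.2 t
  have hyt : (y₁ t, y₂ t) = z := Prod.ext hy₁t hy₂t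
  refine ⟨y₁, y₂, hy₁, hy₂, hy₁U, hy₂U, hyt, fun s hs => ?_, fun s hs => ?_⟩
  · have h := (hasFDerivAt_of_differentiableOn_uncurry (hU.prod hU) hχ hs hz).differentiableAt
    rw [← hyt] at h ⊢
    exact (HasFDerivAt.comp_hasDerivAt (f := fun τ => (y₁ τ, y₂ τ)) t h.hasFDerivAt
      (hv₁.prodMk hv₂)).deriv
  · rw [xiF, hy₁t, hy₂t]
    exact ((hasDerivWithinAt_variationField hχ (Ioo_subset_Icc_self hs) hz).hasDerivAt
      (Icc_mem_nhds hs.1 hs.2)).deriv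

lemma le_deriv_deriv_pathLagrangian_of_curves (hU : IsOpen U) {V : (Fin m → ℝ) → ℝ}
    {χ : ℝ → (Fin m → ℝ) → (Fin m → ℝ) → (Fin m → ℝ)}
    (hχ : DifferentiableOn ℝ (uncurry fun s => uncurry (χ s)) (Icc 0 1 ×ˢ U ×ˢ U)) {κ t : ℝ}
    (hconv : ∀ y₁ y₂ : ℝ → Fin m → ℝ, ContDiff ℝ (⊤ : ℕ∞) y₁ → ContDiff ℝ (⊤ : ℕ∞) y₂ →
      (∀ τ, y₁ τ ∈ U) → (∀ τ, y₂ τ ∈ U) → ∀ s ∈ Ioo (0 : ℝ) 1,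
      κ * dotp ((g (χ s (y₁ t) (y₂ t))).mulVec (xiF χ y₁ y₂ s t)) (xiF χ y₁ y₂ s t) ≤
        deriv (deriv fun r => 1 / 2 * dotp ((g (χ r (y₁ t) (y₂ t))).mulVec (etaF χ y₁ y₂ r t))
          (etaF χ y₁ y₂ r t) + V (χ r (y₁ t) (y₂ t))) s)
    {z : (Fin m → ℝ) × (Fin m → ℝ)} (hz : z ∈ U ×ˢ U) (ż : (Fin m → ℝ) × (Fin m → ℝ))
    {s : ℝ} (hs : s ∈ Ioo (0 : ℝ) 1) :
    κ * matrixForm (g (χ s z.1 z.2)) (variationField (fun s => uncurry (χ s)) s z)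
        (variationField (fun s => uncurry (χ s)) s z) ≤
      deriv (deriv (pathLagrangian (fun x => matrixForm (g x)) V (fun s => uncurry (χ s)) z ż))
        s := by
  obtain ⟨y₁, y₂, hy₁, hy₂, hy₁U, hy₂U, rfl, hη, hξ⟩ := exists_curves_etaF_xiF hU hχ hz ż t
  have hpath : pathLagrangian (fun x => matrixForm (g x)) V (fun s => uncurry (χ s))
      (y₁ t, y₂ t) ż =ᶠ[nhds s] fun r => 1 / 2 * dotp ((g (χ r (y₁ t) (y₂ t))).mulVec
        (etaF χ y₁ y₂ r t)) (etaF χ y₁ y₂ r t) + V (χ r (y₁ t) (y₂ t)) := by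
    filter_upwards [Icc_mem_nhds hs.1 hs.2] with r hr
    rw [pathLagrangian, lagrangian, matrixForm_apply, hη r hr, uncurry_apply_pair]
  rw [hpath.deriv.deriv_eq, matrixForm_apply, ← hξ s hs]
  exact hconv y₁ y₂ hy₁ hy₂ hy₁U hy₂U s hs

lemma mul_dotp_le {M : Matrix (Fin m) (Fin m) ℝ} (hM : M.PosDef) {κ : ℝ} (hκ : 0 ≤ κ)
    (a b c : Fin m → ℝ) :
    κ * dotp (M.mulVec b) b ≤
      κ * (dotp (M.mulVec a) a + dotp (M.mulVec b) b * (dotp (M.mulVec c) c + 1)) := by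
  have hnonneg (v : Fin m → ℝ) : 0 ≤ dotp (M.mulVec v) v := by
    rcases eq_or_ne v 0 with rfl | hv
    · simp [dotp]
    · exact (matrixForm_apply M v v ▸ matrixForm_pos hM hv).le
  gcongr
  linarith [hnonneg a, mul_nonneg (hnonneg b) (hnonneg c)]

end Coordinates

theorem stmt2_general {m : ℕ} {U : Set (Fin m → ℝ)} (hU : IsOpen U)
    {g : (Fin m → ℝ) → Matrix (Fin m) (Fin m) ℝ}
    (hg : ∀ i j, ContDiffOn ℝ 2 (fun y => g y i j) U) (hgpos : ∀ x ∈ U, (g x).PosDef)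
    {V : ℝ → (Fin m → ℝ) → ℝ} (hV : ∀ t, ContDiffOn ℝ 2 (V t) U)
    {K : Set (Fin m → ℝ)} (hK : IsCompact K) (hKU : K ⊆ U) {κ : ℝ} (hκ : 0 < κ)
    {χ : ℝ → (Fin m → ℝ) → (Fin m → ℝ) → (Fin m → ℝ)}
    (hχ : ContDiffOn ℝ 3 (fun p : ℝ × (Fin m → ℝ) × (Fin m → ℝ) => χ p.1 p.2.1 p.2.2)
      (Icc (0 : ℝ) 1 ×ˢ U ×ˢ U))
    (hχU : ∀ s ∈ Icc (0 : ℝ) 1, ∀ x ∈ U, ∀ y ∈ U, χ s x y ∈ U)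
    (hχ0 : ∀ x ∈ U, ∀ y ∈ U, χ 0 x y = x) (hχ1 : ∀ x ∈ U, ∀ y ∈ U, χ 1 x y = y)
    (hconv : ∀ y₁ y₂ : ℝ → Fin m → ℝ, ContDiff ℝ (⊤ : ℕ∞) y₁ → ContDiff ℝ (⊤ : ℕ∞) y₂ →
      (∀ τ, y₁ τ ∈ U) → (∀ τ, y₂ τ ∈ U) → ∀ t, ∀ s ∈ Ioo (0 : ℝ) 1,
      κ * dotp ((g (χ s (y₁ t) (y₂ t))).mulVec (xiF χ y₁ y₂ s t)) (xiF χ y₁ y₂ s t) ≤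
        deriv (deriv fun r => 1 / 2 * dotp ((g (χ r (y₁ t) (y₂ t))).mulVec (etaF χ y₁ y₂ r t))
          (etaF χ y₁ y₂ r t) + V t (χ r (y₁ t) (y₂ t))) s)
    {x₁ x₂ : ℝ → Fin m → ℝ} (hx₁ : ContDiff ℝ 2 x₁) (hx₂ : ContDiff ℝ 2 x₂)
    (hx₁K : ∀ t, x₁ t ∈ K) (hx₂K : ∀ t, x₂ t ∈ K)
    (hB₁ : ∃ B : ℝ, ∀ t, eNorm (deriv x₁ t) ≤ B) (hB₂ : ∃ B : ℝ, ∀ t, eNorm (deriv x₂ t) ≤ B)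
    (hEL₁ : ∀ t, deriv (deriv x₁) t + christoffel g (x₁ t) (deriv x₁ t) (deriv x₁ t) =
      (g (x₁ t))⁻¹.mulVec (pd (V t) (x₁ t)))
    (hEL₂ : ∀ t, deriv (deriv x₂) t + christoffel g (x₂ t) (deriv x₂ t) (deriv x₂ t) =
      (g (x₂ t))⁻¹.mulVec (pd (V t) (x₂ t))) :
    x₁ = x₂ := by
  obtain ⟨B₁, hB₁⟩ := hB₁
  obtain ⟨B₂, hB₂⟩ := hB₂
  have hEL {x : ℝ → Fin m → ℝ} (hx : ContDiff ℝ 2 x) (hxK : ∀ t, x t ∈ K) {t : ℝ} :=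
    isEulerLagrangeAt_of_christoffel hU (fun i j => (hg i j).of_le one_le_two) hgpos
      (((hV t).differentiableOn two_ne_zero).differentiableAt (hU.mem_nhds (hKU (hxK t))))
      (hKU (hxK t)) (hx.differentiable two_ne_zero t) (hx.differentiable_deriv_two t)
  have hz : Differentiable ℝ fun τ => (x₁ τ, x₂ τ) :=
    (hx₁.differentiable two_ne_zero).prodMk (hx₂.differentiable two_ne_zero)
  have hspeed (t : ℝ) : ‖deriv (fun τ => (x₁ τ, x₂ τ)) t‖ ≤ max B₁ B₂ := by
    rw [((hx₁.differentiable two_ne_zero t).hasDerivAt.prodMk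
      (hx₂.differentiable two_ne_zero t).hasDerivAt).deriv]
    exact max_le_max ((norm_le_eNorm _).trans (hB₁ t)) ((norm_le_eNorm _).trans (hB₂ t))
  have hχx₁ : (fun τ => Function.uncurry (χ 0) (x₁ τ, x₂ τ)) = x₁ :=
    funext fun τ => hχ0 _ (hKU (hx₁K τ)) _ (hKU (hx₂K τ))
  have hχx₂ : (fun τ => Function.uncurry (χ 1) (x₁ τ, x₂ τ)) = x₂ :=
    funext fun τ => hχ1 _ (hKU (hx₁K τ)) _ (hKU (hx₂K τ))
  have hends : ∀ t, Function.uncurry (χ 0) (x₁ t, x₂ t) = Function.uncurry (χ 1) (x₁ t, x₂ t) := by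
    refine endpoints_eq_of_isEulerLagrangeAt (X := fun s => Function.uncurry (χ s)) hU (hU.prod hU)
      (contDiffOn_matrixForm hg) (fun x hx => matrixForm_symm (hgpos x hx))
      (fun x hx v => matrixForm_pos (hgpos x hx)) hV hχ (fun s hs z hz => hχU s hs _ hz.1 _ hz.2)
      (hK.prod hK) (prod_mono hKU hKU) hz (fun t => ⟨hx₁K t, hx₂K t⟩) hspeed hκ ?_ ?_ ?_
    · exact fun t s => le_deriv_deriv_pathLagrangian_of_curves hU
        (hχ.differentiableOn three_ne_zero)
        (fun y₁ y₂ hy₁ hy₂ hy₁U hy₂U => hconv y₁ y₂ hy₁ hy₂ hy₁U hy₂U t)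
        ⟨hKU (hx₁K t), hKU (hx₂K t)⟩ _
    · exact fun t => hχx₁.symm ▸ hEL hx₁ hx₁K (hEL₁ t)
    · exact fun t => hχx₂.symm ▸ hEL hx₂ hx₂K (hEL₂ t)
  exact hχx₁.symm.trans ((funext hends).trans hχx₂)

/-- Uniqueness of bounded classical solutions (single-chart form of the paper's
uniqueness proposition): given a connecting map `χ` with the stated convexity property,
for each `φ ∈ 𝕋^k` there is at most one `C²` solution `x : ℝ → 𝒦` of the
Euler–Lagrange equations with bounded derivative. -/
theorem stmt2 {k m : ℕ} (ω : Fin k → ℝ)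
    (U : Set (Fin m → ℝ)) (hU : IsOpen U)
    (g : (Fin m → ℝ) → Matrix (Fin m) (Fin m) ℝ)
    (hg : ∀ i j, ContDiffOn ℝ (⊤ : ℕ∞) (fun y => g y i j) U)
    (hgpos : ∀ x ∈ U, (g x).PosDef)
    (W : (Fin k → ℝ) → (Fin m → ℝ) → ℝ)
    (hWper : ∀ x, TorusPer (fun φ => W φ x))
    (hW : ContDiffOn ℝ (⊤ : ℕ∞) (fun p : (Fin k → ℝ) × (Fin m → ℝ) => W p.1 p.2)
      (Set.univ ×ˢ U))
    (K : Set (Fin m → ℝ)) (hK : IsCompact K) (hKU : K ⊆ U)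
    (κ : ℝ) (hκ : 0 < κ)
    (χ : ℝ → (Fin m → ℝ) → (Fin m → ℝ) → (Fin m → ℝ))
    (hχsmooth : ContDiffOn ℝ (⊤ : ℕ∞)
      (fun p : ℝ × (Fin m → ℝ) × (Fin m → ℝ) => χ p.1 p.2.1 p.2.2)
      (Set.Icc (0:ℝ) 1 ×ˢ U ×ˢ U))
    (hχU : ∀ s ∈ Set.Icc (0:ℝ) 1, ∀ x ∈ U, ∀ y ∈ U, χ s x y ∈ U)
    -- (i) `χ(0,x,y) = x` and `χ(1,x,y) = y`:
    (hχ0 : ∀ x ∈ U, ∀ y ∈ U, χ 0 x y = x)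
    (hχ1 : ∀ x ∈ U, ∀ y ∈ U, χ 1 x y = y)
    -- (ii) `∂_s χ(0,x,y) ≠ 0` whenever `x ≠ y`:
    (hχne : ∀ x ∈ U, ∀ y ∈ U, x ≠ y → deriv (fun s : ℝ => χ s x y) 0 ≠ 0)
    -- (iii) the convexity property of the Lagrangian density along `χ`:
    (hconv : ∀ x₁ x₂ : ℝ → (Fin m → ℝ), ContDiff ℝ (⊤ : ℕ∞) x₁ → ContDiff ℝ (⊤ : ℕ∞) x₂ →
      (∀ t, x₁ t ∈ U) → (∀ t, x₂ t ∈ U) → ∀ φ : Fin k → ℝ,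
      ∀ s ∈ Set.Icc (0:ℝ) 1, ∀ t : ℝ,
        κ * (dotp
              (Matrix.mulVec (g (χ s (x₁ t) (x₂ t)))
                (deriv (fun s' : ℝ => etaF χ x₁ x₂ s' t) s
                  + christoffel g (χ s (x₁ t) (x₂ t)) (xiF χ x₁ x₂ s t) (etaF χ x₁ x₂ s t)))
              (deriv (fun s' : ℝ => etaF χ x₁ x₂ s' t) s
                  + christoffel g (χ s (x₁ t) (x₂ t)) (xiF χ x₁ x₂ s t) (etaF χ x₁ x₂ s t))
            + dotp (Matrix.mulVec (g (χ s (x₁ t) (x₂ t))) (xiF χ x₁ x₂ s t))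
                (xiF χ x₁ x₂ s t)
              * (dotp (Matrix.mulVec (g (χ s (x₁ t) (x₂ t))) (etaF χ x₁ x₂ s t))
                  (etaF χ x₁ x₂ s t) + 1))
          ≤ deriv (deriv (fun s' : ℝ =>
              (1 / 2) * dotp (Matrix.mulVec (g (χ s' (x₁ t) (x₂ t))) (etaF χ x₁ x₂ s' t))
                  (etaF χ x₁ x₂ s' t)
                + W (φ + t • ω) (χ s' (x₁ t) (x₂ t)))) s) :
    ∀ φ : Fin k → ℝ, ∀ x₁ x₂ : ℝ → (Fin m → ℝ),
      ContDiff ℝ 2 x₁ → ContDiff ℝ 2 x₂ →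
      (∀ t, x₁ t ∈ K) → (∀ t, x₂ t ∈ K) →
      (∃ B : ℝ, ∀ t, eNorm (deriv x₁ t) ≤ B) →
      (∃ B : ℝ, ∀ t, eNorm (deriv x₂ t) ≤ B) →
      (∀ t : ℝ, deriv (deriv x₁) t + christoffel g (x₁ t) (deriv x₁ t) (deriv x₁ t)
        = Matrix.mulVec (g (x₁ t))⁻¹ (gradW W (φ + t • ω) (x₁ t))) →
      (∀ t : ℝ, deriv (deriv x₂) t + christoffel g (x₂ t) (deriv x₂ t) (deriv x₂ t)
        = Matrix.mulVec (g (x₂ t))⁻¹ (gradW W (φ + t • ω) (x₂ t))) →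
      x₁ = x₂ := by
  intro φ x₁ x₂ hx₁ hx₂ hx₁K hx₂K hB₁ hB₂ hEL₁ hEL₂
  have hV (t : ℝ) : ContDiffOn ℝ 2 (W (φ + t • ω)) U :=
    (hW.of_le ENat.LEInfty.out).comp (f := fun x => (φ + t • ω, x)) (by fun_prop)
      fun x hx => ⟨trivial, hx⟩
  exact stmt2_general hU (fun i j => (hg i j).of_le ENat.LEInfty.out) hgpos hV hK hKU hκ
    (hχsmooth.of_le ENat.LEInfty.out) hχU hχ0 hχ1
    (fun y₁ y₂ hy₁ hy₂ hy₁U hy₂U t s hs =>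
      (mul_dotp_le (hgpos _ (hχU s (Ioo_subset_Icc_self hs) _ (hy₁U t) _ (hy₂U t))) hκ.le _ _
        _).trans (hconv y₁ y₂ hy₁ hy₂ hy₁U hy₂U φ s (Ioo_subset_Icc_self hs) t))
    hx₁ hx₂ hx₁K hx₂K hB₁ hB₂ hEL₁ hEL₂
end
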